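/- arXiv:1104.5007 — 2 statements merged into one kernel-verified Lean document; each statement's English description precedes it below -/
import Mathlib

section
/- For every fixed integer k ≥ 4, with t := ⌊(k−2)/2⌋, there exists a constant C_k such that for every integer n ≥ 1 there is an n×n (0,1)-matrix that is not (k+1)-full and has at least n·2^{(1/t!)·α(n)^t − C_k·α(n)^{t−1}} 1-entries; in other words, p_k(n) ≥ n·2^{(1/t!)·α(n)^t − C_k·α(n)^{t−1}}. -/
/-! ## Inverse Ackermann hierarchy -/

/-- Bounded-fuel iteration counter: number of applications of `f` needed to bring `m`
down to a value `≤ 1` (assuming `f` strictly decreases on values `≥ 2`). -/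
def iterCount (f : ℕ → ℕ) : ℕ → ℕ → ℕ
  | 0, _ => 0
  | fuel + 1, m => if m ≤ 1 then 0 else 1 + iterCount f fuel (f m)

/-- The inverse Ackermann hierarchy: `alphaHier 1 m = ⌈m/2⌉`, `alphaHier d 1 = 0` for `d ≥ 2`,
and `alphaHier d m = 1 + alphaHier d (alphaHier (d-1) m)` for `m, d ≥ 2`. -/
def alphaHier : ℕ → ℕ → ℕ
  | 0, m => m
  | 1, m => (m + 1) / 2
  | d + 2, m => iterCount (alphaHier (d + 1)) m m

/-- The inverse Ackermann function `α(m) = min {k ≥ 1 : α_k(m) ≤ 3}`. -/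
noncomputable def invAck (m : ℕ) : ℕ := sInf {k : ℕ | 1 ≤ k ∧ alphaHier k m ≤ 3}

/-! ## Permutations, restrictions, VC-dimension -/

/-- The restriction of the `n`-permutation `π` to the (increasing) `k`-tuple of positions `a`
is the `k`-permutation `σ`. -/
def PermRestrictionIs {n k : ℕ} (π : Equiv.Perm (Fin n)) (a : Fin k → Fin n)
    (σ : Equiv.Perm (Fin k)) : Prop :=
  ∀ i j : Fin k, σ i < σ j ↔ π (a i) < π (a j)

/-- The `k`-tuple of positions `a` is shattered by the family `P` of `n`-permutations. -/
def Shatters {n k : ℕ} (P : Finset (Equiv.Perm (Fin n))) (a : Fin k → Fin n) : Prop :=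
  StrictMono a ∧ ∀ σ : Equiv.Perm (Fin k), ∃ π ∈ P, PermRestrictionIs π a σ

/-- The family `P` of `n`-permutations has VC-dimension at most `k`:
no `(k+1)`-tuple of positions is shattered by `P`. -/
def VCDimLE (n k : ℕ) (P : Finset (Equiv.Perm (Fin n))) : Prop :=
  ∀ a : Fin (k + 1) → Fin n, ¬ Shatters P a

/-- The number of `1`-entries of the union of the permutation matrices of a family `P`
of `n`-permutations. -/
noncomputable def permOnes {n : ℕ} (P : Finset (Equiv.Perm (Fin n))) : ℕ :=
  Nat.card {p : Fin n × Fin n // ∃ π ∈ P, π p.2 = p.1}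

/-- `v(P) = |M_P| / n`, the average number of `1`-entries per column of the union
of the permutation matrices of the family `P`. -/
noncomputable def vPerm {n : ℕ} (P : Finset (Equiv.Perm (Fin n))) : ℝ :=
  (permOnes P : ℝ) / (n : ℝ)

/-! ## (0,1)-matrices -/

/-- The number of `1`-entries of a `(0,1)`-matrix (represented as a `Bool` matrix). -/
noncomputable def matOnes {m n : ℕ} (M : Fin m → Fin n → Bool) : ℕ :=
  Nat.card {p : Fin m × Fin n // M p.1 p.2 = true}

/-- The number of `1`-entries in column `j` of a `(0,1)`-matrix. -/
noncomputable def colOnes {m n : ℕ} (M : Fin m → Fin n → Bool) (j : Fin n) : ℕ :=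
  Nat.card {i : Fin m // M i j = true}

/-- The matrix `B` contains the matrix `S`. -/
def MatContains {m n p q : ℕ} (B : Fin m → Fin n → Bool) (S : Fin p → Fin q → Bool) : Prop :=
  ∃ (r : Fin p → Fin m) (c : Fin q → Fin n), StrictMono r ∧ StrictMono c ∧
    ∀ a b, S a b = true → B (r a) (c b) = true

/-- The `s × 2` matrix `DS_s`, with a `1`-entry in (1-indexed) row `i` and column `j`
exactly when `i + j` is odd. -/
def DS (s : ℕ) : Fin s → Fin 2 → Bool :=
  fun i j => decide ((i.val + j.val) % 2 = 1)

/-- The maximum number of `1`-entries in an `n × n` matrix avoiding `S`. -/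
noncomputable def exMat {p q : ℕ} (S : Fin p → Fin q → Bool) (n : ℕ) : ℕ :=
  sSup {x : ℕ | ∃ M : Fin n → Fin n → Bool, ¬ MatContains M S ∧ matOnes M = x}

/-- An `n × n` matrix is `k`-full if some increasing `k`-tuple of columns contains
every `k`-permutation matrix. -/
def IsFull (k : ℕ) {n : ℕ} (M : Fin n → Fin n → Bool) : Prop :=
  ∃ c : Fin k → Fin n, StrictMono c ∧ ∀ σ : Equiv.Perm (Fin k),
    ∃ r : Fin k → Fin n, StrictMono r ∧ ∀ b : Fin k, M (r (σ b)) (c b) = true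

/-- `pFull k n` is the maximum number of `1`-entries in an `n × n` matrix that is
not `(k+1)`-full. -/
noncomputable def pFull (k n : ℕ) : ℕ :=
  sSup {x : ℕ | ∃ M : Fin n → Fin n → Bool, ¬ IsFull (k + 1) M ∧ matOnes M = x}

/-! ## Formations -/

/-- `M` contains a `B`-fat `(r,s)`-formation: there are an `s`-partition of the rows into
intervals (the fibers of a monotone map `g`) and `r` columns, each having at least `B`
`1`-entries in every interval. -/
def FatFormation (B r s : ℕ) {m n : ℕ} (M : Fin m → Fin n → Bool) : Prop :=
  ∃ g : Fin m → Fin s, Monotone g ∧ ∃ c : Fin r → Fin n, StrictMono c ∧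
    ∀ (j : Fin r) (i : Fin s), B ≤ Nat.card {x : Fin m // g x = i ∧ M x (c j) = true}

/-- `M` contains a doubled `(r,s)`-formation: there are an `s`-partition of the rows into
intervals and `r` columns, each having at least one `1`-entry in the first and last
interval and at least two `1`-entries in every other interval. -/
def DoubledFormation (r s : ℕ) {m n : ℕ} (M : Fin m → Fin n → Bool) : Prop :=
  ∃ g : Fin m → Fin s, Monotone g ∧ ∃ c : Fin r → Fin n, StrictMono c ∧
    ∀ (j : Fin r) (i : Fin s),
      1 ≤ Nat.card {x : Fin m // g x = i ∧ M x (c j) = true} ∧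
      (i.val ≠ 0 → i.val ≠ s - 1 → 2 ≤ Nat.card {x : Fin m // g x = i ∧ M x (c j) = true})

/-! ## The functions R, D, β -/

/-- Nivasch's hierarchy `R_s(d)` (shifted as in the paper). -/
def Rfun : ℕ → ℕ → ℕ
  | 0, _ => 0
  | 1, _ => 0
  | 2, _ => 2
  | 3, _ => 3
  | 4, d => 2 * d + 1
  | _ + 5, 0 => 0
  | _ + 5, 1 => 0
  | s + 5, 2 => 2 ^ (s + 3) + 1
  | s + 5, d + 3 =>
      2 * (Rfun (s + 4) (d + 3) - 1) + (Rfun (s + 3) (d + 3) - 1) * (Rfun (s + 5) (d + 2) - 3) + 1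
  termination_by s d => (s, d)

/-- The hierarchy `D_s(d)`. -/
def Dfun : ℕ → ℕ → ℕ
  | 0, _ => 0
  | 1, _ => 0
  | 2, _ => 2
  | _ + 3, 0 => 0
  | _ + 3, 1 => 0
  | s + 3, 2 => 2 ^ (s + 2) + 2 ^ (s + 1) - 1
  | s + 3, d + 3 =>
      2 * Dfun (s + 2) (d + 3) + (Dfun (s + 1) (d + 3) + 1) * (Rfun (s + 3) (d + 2) - 3)
        + Dfun (s + 3) (d + 2) - Rfun (s + 3) (d + 2) + 1
  termination_by s d => (s, d)

/-- `β_s(m) = D_s(α(m))`. -/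
noncomputable def betaFun (s m : ℕ) : ℕ := Dfun s (invAck m)

/-! ## Sequences: MST and formations in sequences -/

/-- The list of column indices of the `1`-entries of a row, in increasing order. -/
def rowList {n : ℕ} (row : Fin n → Bool) : List (Fin n) :=
  (List.finRange n).filter (fun j => row j)

/-- The matrix → sequence transformation: read the rows top to bottom, writing for each
`1`-entry the index of its column. -/
def MST {m n : ℕ} (M : Fin m → Fin n → Bool) : List (Fin n) :=
  ((List.finRange m).map (fun i => rowList (M i))).flatten

/-- The list `L` contains an `(r,s)`-formation as a subsequence: a concatenation of `s`
permutations of the same `r`-element set of symbols is a sublist of `L`. -/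
def IsFormationSeq {A : Type*} [DecidableEq A] (r s : ℕ) (L : List A) : Prop :=
  ∃ (T : Finset A) (F : List (List A)), T.card = r ∧ F.length = s ∧
    (∀ l ∈ F, l.Nodup ∧ l.toFinset = T) ∧ List.Sublist F.flatten L

/-!
Two ideas are combined. First, if a word contains every ordering of a set of `k ≥ 2` symbols as a
subsequence, then two of these symbols form an alternation of length `k + 1` in it: induct, cutting
the word where the last of the symbols appears for the first time. Hence a matrix is not `k`-full
if its word of `1`-entries, read row by row with some order within each row, has no alternation
longer than `k`.

Second, such matrices with many `1`-entries come from Nivasch's recursion for Davenport–Schinzel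
sequences. The rows are blocks of `m` distinct symbols. Given a sequence `T` of long blocks, replace
each of them by a sequence `V` of the previous level, whose alternations are shorter by `2`, and
distribute each block of the result over the ends of the blocks of its own copy of a sequence `L`
with shorter blocks. The multiplicities `μ t k` then satisfy `μ 0 k = 2` and
`μ (t + 1) (k + 1) = μ t k * μ (t + 1) k`, so that `μ t k = 2 ^ choose k t`, while the numbers of
symbols and of blocks stay below the `k`-th level of an Ackermann hierarchy.
-/

theorem sublist_of_cons_sublist_append_cons {A : Type*} {x : A} {l u v : List A} (hx : x ∉ u)
    (h : (x :: l).Sublist (u ++ x :: v)) : l.Sublist v := by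
  induction u with
  | nil => exact List.cons_sublist_cons.1 h
  | cons c u ih =>
    rw [List.mem_cons, not_or] at hx
    rw [List.cons_append, List.cons_sublist_cons'] at h
    exact h.elim (ih hx.2) fun h => absurd h.1 hx.1

theorem notMem_of_nodup_append_cons {I : Type*} {u v : List I} {p : I}
    (h : (u ++ p :: v).Nodup) : p ∉ u ∧ p ∉ v := by
  simpa only [List.mem_append, not_or] using (List.nodup_cons.1 (List.nodup_middle.1 h)).1

theorem exists_of_flatMap_eq_append_cons {I B : Type*} {f : I → List B} {l : List I}
    {P : List B} {D : B} {Q : List B} (h : l.flatMap f = P ++ D :: Q) :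
    ∃ l₁ p l₂ P' Q', l = l₁ ++ p :: l₂ ∧ f p = P' ++ D :: Q' ∧ P = l₁.flatMap f ++ P' ∧
      Q = Q' ++ l₂.flatMap f := by
  induction l generalizing P with
  | nil => simp at h
  | cons p l ih =>
    obtain ⟨R, hP, hl⟩ | ⟨R, hp, hR⟩ := List.append_eq_append_iff.1 (List.flatMap_cons ▸ h)
    · obtain ⟨l₁, p', l₂, P', Q', rfl, hp', rfl, rfl⟩ := ih hl
      exact ⟨p :: l₁, p', l₂, P', Q', rfl, hp', by simp [hP], rfl⟩
    · rcases R with _ | ⟨D', R⟩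
      · obtain ⟨l₁, p', l₂, P', Q', rfl, hp', hP', rfl⟩ := ih (P := []) hR.symm
        refine ⟨p :: l₁, p', l₂, P', Q', rfl, hp', ?_, rfl⟩
        rw [List.flatMap_cons, List.append_assoc, ← hP', hp, List.append_nil, List.append_nil]
      · obtain ⟨rfl, rfl⟩ := List.cons_eq_cons.1 hR
        exact ⟨[], p, l, P, R, rfl, hp, rfl, rfl⟩

theorem exists_perm_eq_ofFn_comp {A : Type*} [DecidableEq A] {k : ℕ} {x : Fin k → A}
    (hx : Function.Injective x) {l : List A} (hl : l.Nodup)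
    (h : l.toFinset = Finset.univ.image x) : ∃ σ : Equiv.Perm (Fin k), l = List.ofFn (x ∘ σ) := by
  obtain rfl : l.length = k := by
    rw [← List.toFinset_card_of_nodup hl, h, Finset.card_image_of_injective _ hx, Finset.card_fin]
  have hmem : ∀ i, ∃ j, x j = l.get i := fun i => by
    have hi : l.get i ∈ Finset.univ.image x := h ▸ List.mem_toFinset.2 (List.get_mem l i)
    simpa only [Finset.mem_image, Finset.mem_univ, true_and] using hi
  choose σ hσ using hmem
  have hσ_inj : Function.Injective σ := fun i j hij =>
    hl.injective_get (by rw [← hσ, ← hσ, hij])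
  refine ⟨Equiv.ofBijective σ (Finite.injective_iff_bijective.1 hσ_inj), ?_⟩
  rw [Equiv.coe_ofBijective, show x ∘ σ = l.get from funext hσ, List.ofFn_get]

/-! ### Alternations in words -/

section Alternation

variable {A B : Type*} [DecidableEq A] [DecidableEq B] {a b : A}

/-- The length of the longest alternation `a b a b …` starting with `a` that is a subsequence of
a word, computed greedily. -/
def altLength : A → A → List A → ℕ
  | _, _, [] => 0
  | a, b, c :: w => if c = a then altLength b a w + 1 else altLength a b w

theorem altLength_swap_le (a b : A) (w : List A) : altLength a b w ≤ altLength b a w + 1 := by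
  induction w generalizing a b with
  | nil => simp only [altLength, Nat.zero_le]
  | cons c w ih =>
    have hab := ih a b
    have hba := ih b a
    rcases eq_or_ne a b with rfl | _
    · omega
    · simp only [altLength]
      split_ifs <;> omega

theorem altLength_append (a b : A) (u v : List A) :
    altLength a b (u ++ v) = altLength a b u +
      if Even (altLength a b u) then altLength a b v else altLength b a v := by
  induction u generalizing a b with
  | nil => simp [altLength]
  | cons c u ih =>
    simp only [List.cons_append, altLength]
    split_ifs with hc <;> rw [ih] <;> grind

theorem altLength_le_of_sublist {u v : List A} (h : u.Sublist v) (a b : A) :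
    altLength a b u ≤ altLength a b v := by
  induction h generalizing a b with
  | slnil => rfl
  | @cons u v c _ ih =>
    have hle := ih a b
    have hswap := altLength_swap_le a b v
    simp only [altLength]
    split_ifs <;> omega
  | cons_cons c _ ih =>
    have hab := ih a b
    have hba := ih b a
    simp only [altLength]
    split_ifs <;> omega

theorem altLength_append_le_append {u v u' v' : List A} (hu : altLength a b u ≤ altLength a b u')
    (hv : altLength a b v ≤ altLength a b v') (hv' : altLength b a v ≤ altLength b a v') :
    altLength a b (u ++ v) ≤ altLength a b (u' ++ v') := by
  rw [altLength_append, altLength_append]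
  have hswap := altLength_swap_le a b v'
  have hswap' := altLength_swap_le b a v'
  split_ifs <;> grind

theorem altLength_le_two_mul_count (a b : A) (w : List A) : altLength a b w ≤ 2 * w.count a := by
  induction w with
  | nil => simp [altLength]
  | cons c w ih =>
    have hswap := altLength_swap_le b a w
    simp only [altLength, List.count_cons, beq_iff_eq]
    split_ifs <;> omega

theorem altLength_le_two_mul_count_add_one (a b : A) (w : List A) :
    altLength a b w ≤ 2 * w.count b + 1 :=
  (altLength_swap_le a b w).trans (Nat.succ_le_succ (altLength_le_two_mul_count b a w))

theorem altLength_eq_zero_of_notMem {w : List A} (h : a ∉ w) : altLength a b w = 0 := by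
  simpa [List.count_eq_zero_of_not_mem h] using altLength_le_two_mul_count a b w

theorem altLength_le_one_of_notMem {w : List A} (h : b ∉ w) : altLength a b w ≤ 1 := by
  simpa [List.count_eq_zero_of_not_mem h] using altLength_le_two_mul_count_add_one a b w

theorem one_le_altLength_of_mem {w : List A} (h : a ∈ w) : 1 ≤ altLength a b w := by
  simpa [altLength] using altLength_le_of_sublist (List.singleton_sublist.2 h) a b

theorem altLength_append_of_notMem_left {u : List A} (h : a ∉ u) (v : List A) :
    altLength a b (u ++ v) = altLength a b v := by
  simp [altLength_append, altLength_eq_zero_of_notMem h]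

theorem altLength_append_of_notMem_right (u : List A) {v : List A} (ha : a ∉ v) (hb : b ∉ v) :
    altLength a b (u ++ v) = altLength a b u := by
  simp [altLength_append, altLength_eq_zero_of_notMem ha, altLength_eq_zero_of_notMem hb]

theorem altLength_filterMap {g : A → Option B} {a' b' : B} (ha : ∀ x, g x = some a' ↔ x = a)
    (hb : ∀ x, g x = some b' ↔ x = b) (w : List A) :
    altLength a' b' (w.filterMap g) = altLength a b w := by
  induction w generalizing a b a' b' with
  | nil => rfl
  | cons c w ih =>
    rcases hc : g c with _ | y
    · have hca : c ≠ a := fun h => by simp [(ha c).2 h] at hc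
      rw [List.filterMap_cons_none hc, ih ha hb, altLength, if_neg hca]
    · have hya : y = a' ↔ c = a := by rw [← ha c, hc, Option.some_inj]
      simp only [List.filterMap_cons_some hc, altLength, hya, ih ha hb, ih hb ha]

theorem altLength_map {f : A → B} (hf : Function.Injective f) (a b : A) (w : List A) :
    altLength (f a) (f b) (w.map f) = altLength a b w := by
  rw [← List.filterMap_eq_map]
  exact altLength_filterMap (fun x => by simp [hf.eq_iff]) (fun x => by simp [hf.eq_iff]) w

theorem count_filterMap_of_forall_iff {g : A → Option B} {b : B} (h : ∀ x, g x = some b ↔ x = a)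
    (w : List A) : (w.filterMap g).count b = w.count a := by
  rw [List.count_filterMap]
  exact List.countP_congr fun x _ => by simp [h x]

theorem altLength_of_idxOf_le {w : List A} (hab : a ≠ b) (h : w.idxOf a ≤ w.idxOf b) :
    altLength b a w = 0 ∨ altLength a b w = altLength b a w + 1 := by
  induction w with
  | nil => exact .inl rfl
  | cons c w ih =>
    rcases eq_or_ne c a with rfl | hca
    · exact .inr (by simp [altLength, hab])
    · have hcb : c ≠ b := by
        rintro rfl
        simp [List.idxOf_cons_ne _ hca] at h
      rw [List.idxOf_cons_ne _ hca, List.idxOf_cons_ne _ hcb, Nat.succ_le_succ_iff] at h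
      simpa only [altLength, if_neg hca, if_neg hcb] using ih h

theorem altLength_append_append_le {s : ℕ} {u v w : List A} (hu : altLength a b u ≤ 1)
    (hw : altLength b a w ≤ 1) (hv : altLength b a v = 0 ∨ altLength a b v = altLength b a v + 1)
    (hab : altLength a b v ≤ 2 * s + 1) (hba : altLength b a v ≤ 2 * s + 1) :
    altLength a b (u ++ (v ++ w)) ≤ 2 * s + 3 ∧ altLength b a (u ++ (v ++ w)) ≤ 2 * s + 3 := by
  have hu' := altLength_swap_le b a u
  have hw' := altLength_swap_le a b w
  simp only [altLength_append, Nat.even_iff]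
  constructor <;> split_ifs <;> omega

theorem altLength_flatMap_le_flatMap {I : Type*} {l : List I} {f g : I → List A}
    (hfg : ∀ i ∈ l, f i ⊆ g i) (hab : ∀ i ∈ l, ¬ (a ∈ g i ∧ b ∈ g i)) :
    altLength a b (l.flatMap f) ≤ altLength a b (l.flatMap g) := by
  have hle : ∀ {x y : A} {u v : List A}, u ⊆ v → ¬ (x ∈ v ∧ y ∈ v) →
      altLength x y u ≤ altLength x y v := by
    intro x y u v huv hxy
    by_cases hx : x ∈ u
    · have hy : y ∉ u := fun hy => hxy ⟨huv hx, huv hy⟩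
      exact (altLength_le_one_of_notMem hy).trans (one_le_altLength_of_mem (huv hx))
    · exact (altLength_eq_zero_of_notMem hx).trans_le (Nat.zero_le _)
  induction l generalizing a b with
  | nil => rfl
  | cons i l ih =>
    rw [List.forall_mem_cons] at hfg hab
    rw [List.flatMap_cons, List.flatMap_cons]
    exact altLength_append_le_append (hle hfg.1 hab.1) (ih hfg.2 hab.2)
      (ih hfg.2 fun i hi h => hab.2 i hi h.symm)

section FlatMap

variable {I : Type*} {l : List I} {p : I} {f : I → List A}

theorem altLength_flatMap_eq (hl : l.Nodup) (hp : p ∈ l) (ha : ∀ q, a ∈ f q → q = p)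
    (hb : ∀ q, b ∈ f q → q = p) : altLength a b (l.flatMap f) = altLength a b (f p) := by
  obtain ⟨u, v, rfl⟩ := List.append_of_mem hp
  obtain ⟨hu, hv⟩ := notMem_of_nodup_append_cons hl
  have hnot : ∀ {c : A}, (∀ q, c ∈ f q → q = p) → ∀ w : List I, p ∉ w → c ∉ w.flatMap f := by
    intro c hc w hw hcw
    obtain ⟨q, hq, hcq⟩ := List.mem_flatMap.1 hcw
    exact hw (hc q hcq ▸ hq)
  rw [List.flatMap_append, List.flatMap_cons, altLength_append_of_notMem_left (hnot ha u hu),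
    altLength_append_of_notMem_right _ (hnot ha v hv) (hnot hb v hv)]

theorem altLength_flatMap_le {k : ℕ} (hl : l.Nodup) (hp : p ∈ l) (ha : ∀ q, a ∈ f q → q = p)
    (hab : altLength a b (f p) ≤ k) (hba : altLength b a (f p) ≤ k) :
    altLength a b (l.flatMap f) ≤ k + 2 ∧ altLength b a (l.flatMap f) ≤ k + 2 := by
  obtain ⟨u, v, rfl⟩ := List.append_of_mem hp
  obtain ⟨hu, hv⟩ := notMem_of_nodup_append_cons hl
  have hnot : ∀ w : List I, p ∉ w → a ∉ w.flatMap f := by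
    intro w hw haw
    obtain ⟨q, hq, haq⟩ := List.mem_flatMap.1 haw
    exact hw (ha q haq ▸ hq)
  have hua := altLength_eq_zero_of_notMem (b := b) (hnot u hu)
  have hub := altLength_le_one_of_notMem (a := b) (hnot u hu)
  have hva := altLength_eq_zero_of_notMem (b := b) (hnot v hv)
  have hvb := altLength_le_one_of_notMem (a := b) (hnot v hv)
  rw [List.flatMap_append, List.flatMap_cons]
  simp only [altLength_append]
  constructor <;> split_ifs <;> omega

end FlatMap

theorem altLength_append_reverse_le {l : List A} (hl : l.Nodup) (hab : a ≠ b) :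
    altLength a b (l ++ l.reverse) ≤ 3 := by
  induction l with
  | nil => simp [altLength]
  | cons c l ih =>
    obtain ⟨hc, hl⟩ := List.nodup_cons.1 hl
    have hc' : c ∉ l ++ l.reverse := by simpa using hc
    have hle := ih hl
    rw [List.reverse_cons, List.cons_append, ← List.append_assoc, altLength]
    split_ifs with hca
    · subst hca
      have hone : altLength b c (l ++ l.reverse) ≤ 1 := altLength_le_one_of_notMem hc'
      rw [altLength_append]
      split_ifs <;> simp only [altLength, if_neg hab, if_true] <;> omega
    · rcases eq_or_ne c b with rfl | hcb
      · have hone : altLength a c (l ++ l.reverse) ≤ 1 := altLength_le_one_of_notMem hc'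
        rw [altLength_append]
        split_ifs <;> simp only [altLength, if_neg hca, if_true] <;> omega
      · rwa [altLength_append_of_notMem_right _ (by simpa using Ne.symm hca)
          (by simpa using Ne.symm hcb)]

theorem mem_left_of_idxOf_le {x y : A} {u v : List A} (hx : x ∉ u) (hxy : x ≠ y)
    (h : (u ++ x :: v).idxOf y ≤ (u ++ x :: v).idxOf x) : y ∈ u := by
  by_contra hy
  rw [List.idxOf_append_of_notMem hy, List.idxOf_append_of_notMem hx,
    List.idxOf_cons_ne _ hxy, List.idxOf_cons_self] at h
  omega

theorem three_le_altLength_or_of_pair_sublist (hab : a ≠ b) {w : List A}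
    (h : [a, b].Sublist w) (h' : [b, a].Sublist w) :
    3 ≤ altLength a b w ∨ 3 ≤ altLength b a w := by
  have ha := altLength_le_of_sublist h a b
  have hb := altLength_le_of_sublist h' b a
  simp only [altLength, if_true] at ha hb
  rcases le_total (w.idxOf a) (w.idxOf b) with hle | hle
  · have := altLength_of_idxOf_le hab hle
    omega
  · have := altLength_of_idxOf_le hab.symm hle
    omega

theorem exists_card_add_one_le_altLength {X : Finset A} (hX : 2 ≤ X.card) {w : List A}
    (h : ∀ l : List A, l.Nodup → l.toFinset = X → l.Sublist w) :
    ∃ a ∈ X, ∃ b ∈ X, a ≠ b ∧ X.card + 1 ≤ altLength a b w := by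
  obtain ⟨r, hr⟩ := Nat.exists_eq_add_of_le' hX
  induction r generalizing X w with
  | zero =>
    obtain ⟨a, b, hab, rfl⟩ := Finset.card_eq_two.1 hr
    have hlong := three_le_altLength_or_of_pair_sublist hab
      (h [a, b] (by simp [hab]) (by simp))
      (h [b, a] (by simp [hab.symm]) (by simp [Finset.pair_comm]))
    rw [hr]
    exact hlong.elim (fun hlong => ⟨a, by simp, b, by simp, hab, hlong⟩)
      fun hlong => ⟨b, by simp, a, by simp, hab.symm, hlong⟩
  | succ r ih =>
    have hmem : ∀ y ∈ X, y ∈ w := fun y hy =>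
      (h X.toList X.nodup_toList X.toList_toFinset).subset (Finset.mem_toList.2 hy)
    -- Cut `w` after the first occurrence of the letter of `X` that appears last.
    obtain ⟨x, hx, hmax⟩ := X.exists_max_image w.idxOf (Finset.card_pos.1 (by omega))
    obtain ⟨u, v, rfl, hxu⟩ := List.eq_append_cons_of_mem (hmem x hx)
    have hcard : (X.erase x).card = r + 2 := by rw [Finset.card_erase_of_mem hx]; omega
    have htail : ∀ l : List A, l.Nodup → l.toFinset = X.erase x → l.Sublist v := by
      intro l hl hlX
      have hxl : x ∉ l := fun hxl => by simpa [hlX] using List.mem_toFinset.2 hxl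
      exact sublist_of_cons_sublist_append_cons hxu
        (h (x :: l) (List.nodup_cons.2 ⟨hxl, hl⟩) (by simp [hlX, Finset.insert_erase hx]))
    obtain ⟨a, ha, b, hb, hab, hlong⟩ := ih (by omega) htail hcard
    obtain ⟨hbx, hbX⟩ := Finset.mem_erase.1 hb
    have hbu : b ∈ u := mem_left_of_idxOf_le hxu hbx.symm (hmax b hbX)
    have hsub : (b :: v).Sublist (u ++ x :: v) :=
      (List.singleton_sublist.2 hbu).append (List.sublist_cons_self x v)
    have hle := altLength_le_of_sublist hsub b a
    rw [altLength, if_pos rfl] at hle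
    exact ⟨b, hbX, a, Finset.mem_of_mem_erase ha, hab.symm, by omega⟩

end Alternation

/-! ### The inverse Ackermann function -/

/-- The Ackermann hierarchy whose upper inverse is the inverse Ackermann hierarchy: `ackHier d` is
inverse to `alphaHier (d + 1)`. -/
def ackHier : ℕ → ℕ → ℕ
  | 0, x => 2 * x
  | d + 1, x => (ackHier d)^[x] 1

theorem ackHier_succ_succ (d x : ℕ) : ackHier (d + 1) (x + 1) = ackHier d (ackHier (d + 1) x) := by
  simp only [ackHier, Function.iterate_succ_apply']

theorem ackHier_one_right (d : ℕ) : ackHier d 1 = 2 := by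
  induction d with
  | zero => rfl
  | succ d ih => rw [ackHier_succ_succ, ackHier, Function.iterate_zero_apply, ih]

theorem ackHier_two_right (d : ℕ) : ackHier d 2 = 4 := by
  induction d with
  | zero => rfl
  | succ d ih => rw [ackHier_succ_succ, ackHier_one_right, ih]

theorem ackHier_add_three (d x : ℕ) : ackHier d (x + 3) = ack (d + 2) x + 3 := by
  induction d generalizing x with
  | zero => rw [ackHier, ack_two]; ring
  | succ d ih =>
    induction x with
    | zero => rw [ackHier_succ_succ, ackHier_two_right, ih, ack_succ_zero]
    | succ x ihx => rw [Nat.add_right_comm, ackHier_succ_succ, ihx, ih, ack_succ_succ]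

theorem iterCount_le {f g : ℕ → ℕ} (h₀ : g 0 ≤ 1) (h : ∀ m x, m ≤ g (x + 1) → f m ≤ g x)
    (fuel : ℕ) {m x : ℕ} (hm : m ≤ g x) : iterCount f fuel m ≤ x := by
  induction fuel generalizing m x with
  | zero => exact Nat.zero_le x
  | succ fuel ih =>
    rw [iterCount]
    split_ifs with hm1
    · exact Nat.zero_le x
    · obtain _ | x := x
      · exact absurd (hm.trans h₀) hm1
      · have := ih (h m x hm)
        omega

theorem alphaHier_succ_le {d m x : ℕ} (h : m ≤ ackHier d x) : alphaHier (d + 1) m ≤ x := by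
  induction d generalizing m x with
  | zero => simp only [ackHier, alphaHier] at *; omega
  | succ d ih =>
    exact iterCount_le (g := ackHier (d + 1)) le_rfl
      (fun m x hm => ih ((ackHier_succ_succ d x) ▸ hm)) m h

theorem invAck_pos (n : ℕ) : 1 ≤ invAck n := by
  have hn : n ≤ ackHier n 3 := by
    have := add_lt_ack (n + 2) 0
    rw [ackHier_add_three n 0]
    omega
  exact (Nat.sInf_mem ⟨n + 1, by omega, alphaHier_succ_le hn⟩ :
    invAck n ∈ {k : ℕ | 1 ≤ k ∧ alphaHier k n ≤ 3}).1

theorem ack_zero_lt_of_le_invAck {d n : ℕ} (h : d + 2 ≤ invAck n) : ack (d + 2) 0 < n := by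
  by_contra! hn
  have hle : alphaHier (d + 1) n ≤ 3 := by
    apply alphaHier_succ_le
    rw [ackHier_add_three d 0]
    omega
  have : invAck n ≤ d + 1 := Nat.sInf_le ⟨by omega, hle⟩
  omega

/-! ### Size bounds -/

theorem five_mul_le_ack_three (x : ℕ) : 5 * x ≤ ack 3 x := by
  have := Nat.lt_two_pow_self (n := x)
  rw [ack_three, pow_add]
  omega

theorem cube_add_self_le_ack_three (x : ℕ) : x ^ 3 + x ≤ ack 3 x := by
  rw [ack_three]
  refine Nat.le_sub_of_add_le ?_
  rcases lt_or_ge x 4 with hx | hx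
  · interval_cases x <;> norm_num
  · induction x, hx using Nat.le_induction with
    | base => norm_num
    | succ x hx ih =>
      rw [Nat.add_right_comm, pow_succ 2]
      nlinarith [mul_le_mul hx hx (Nat.zero_le 4) (Nat.zero_le x)]

/-- A bound on the numbers of symbols and of blocks in the block sequence obtained in `k` stages
with blocks of length `m`. -/
def sizeBound (k m : ℕ) : ℕ := ack (k + 3) (5 * m)

theorem add_two_le_sizeBound (k m : ℕ) : m + 2 ≤ sizeBound k m := by
  have := add_lt_ack (k + 3) (5 * m)
  rw [sizeBound]
  omega

theorem monotone_sizeBound (k : ℕ) : Monotone (sizeBound k) := fun _ _ h =>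
  ack_mono_right _ (Nat.mul_le_mul_left 5 h)

theorem sizeBound_le_ack_ack (k m : ℕ) : sizeBound k m ≤ ack (k + 3) (ack (k + 3) m) :=
  ack_mono_right _ ((five_mul_le_ack_three m).trans (ack_mono_left m (by omega)))

/-- The recursion `sizeBound (k + 1) (m + 1) = f⁵ (sizeBound (k + 1) m)` with `f = ack (k + 3)`
leaves room for two nested calls of `sizeBound k` and a product of three sizes. -/
theorem add_mul_mul_le_sizeBound (k m : ℕ) {x y z : ℕ} (hx : x = sizeBound (k + 1) m)
    (hy : y = sizeBound k x) (hz : z = sizeBound k y) :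
    z + z * y * x ≤ sizeBound (k + 1) (m + 1) := by
  set f := ack (k + 3) with hf
  have hrec : sizeBound (k + 1) (m + 1) = f (f (f (f (f x)))) := by
    simp only [hx, sizeBound, hf, Nat.mul_add, Nat.mul_one]
    simp only [ack_succ_succ]
  have hxy : x ≤ y := by rw [hy]; exact (Nat.le_add_right x 2).trans (add_two_le_sizeBound k x)
  have hyz : y ≤ z := by rw [hz]; exact (Nat.le_add_right y 2).trans (add_two_le_sizeBound k y)
  have hzf : z ≤ f (f (f (f x))) := by
    rw [hz, hy]
    exact (monotone_sizeBound k (sizeBound_le_ack_ack k x)).trans (sizeBound_le_ack_ack k _)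
  calc z + z * y * x ≤ z + z * z * z := by gcongr; exact hxy.trans hyz
    _ = z ^ 3 + z := by ring
    _ ≤ ack 3 z := cube_add_self_le_ack_three z
    _ ≤ f (f (f (f (f x)))) := (ack_mono_left z (by omega)).trans (ack_mono_right _ hzf)
    _ = sizeBound (k + 1) (m + 1) := hrec.symm

theorem two_pow_le_ack_three (x : ℕ) : 2 ^ x ≤ ack 3 x := by
  have := Nat.one_le_two_pow (n := x)
  rw [ack_three, pow_add]
  omega

theorem sizeBound_two_pow_choose_le (k t : ℕ) :
    sizeBound k (2 ^ Nat.choose k t) ≤ ack (k + 6) 0 := by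
  set f := ack (k + 3) with hf
  have hf3 : ∀ x, 2 ^ x ≤ f x := fun x =>
    (two_pow_le_ack_three x).trans (ack_mono_left x (by omega))
  have hmono : Monotone f := ack_mono_right _
  have hpow : 2 ^ Nat.choose k t ≤ f (f k) :=
    calc 2 ^ Nat.choose k t ≤ 2 ^ 2 ^ k :=
          Nat.pow_le_pow_right two_pos (Nat.choose_le_two_pow k t)
      _ ≤ f (f k) := (hf3 _).trans (hmono (hf3 k))
  have hk : k ≤ ack (k + 4) 0 := by
    have := add_lt_ack (k + 4) 0
    omega
  have hfour : 4 ≤ ack (k + 5) 0 := by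
    have := add_lt_ack (k + 5) 0
    omega
  calc sizeBound k (2 ^ Nat.choose k t) ≤ f (f (f (f k))) :=
        (sizeBound_le_ack_ack k _).trans (hmono (hmono hpow))
    _ ≤ f (f (f (f (ack (k + 4) 0)))) := hmono (hmono (hmono (hmono hk)))
    _ = ack (k + 4) 4 := by simp only [hf, ack_succ_succ]
    _ ≤ ack (k + 4) (ack (k + 5) 0) := ack_mono_right _ hfour
    _ = ack (k + 6) 0 := by rw [ack_succ_zero (k + 5), ack_succ_succ (k + 4)]

/-! ### Binomial coefficients and powers -/

theorem pow_succ_le_pow_succ_add {a y d : ℕ} (hay : a ≤ y + d) (hya : y ≤ a) (t : ℕ) :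
    a ^ (t + 1) ≤ y ^ (t + 1) + (t + 1) * d * a ^ t := by
  induction t with
  | zero => simpa using hay
  | succ t ih =>
    calc a ^ (t + 2) = a * a ^ (t + 1) := pow_succ' a (t + 1)
      _ ≤ (y + d) * a ^ (t + 1) := by gcongr
      _ = y * a ^ (t + 1) + d * a ^ (t + 1) := by ring
      _ ≤ y * (y ^ (t + 1) + (t + 1) * d * a ^ t) + d * a ^ (t + 1) := by gcongr
      _ = y ^ (t + 2) + (t + 1) * d * (y * a ^ t) + d * a ^ (t + 1) := by ring
      _ ≤ y ^ (t + 2) + (t + 1) * d * (a * a ^ t) + d * a ^ (t + 1) := by gcongr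
      _ = y ^ (t + 2) + (t + 1 + 1) * d * a ^ (t + 1) := by ring

theorem pow_succ_div_factorial_le_choose_sub (a c t : ℕ) :
    (a : ℝ) ^ (t + 1) / (t + 1).factorial ≤
      Nat.choose (a - c) (t + 1) + (t + 1) * (c + t) / (t + 1).factorial * (a : ℝ) ^ t := by
  have hchoose := Nat.pow_le_choose (α := ℝ) (t + 1) (a - c)
  have hpow : (a : ℝ) ^ (t + 1) ≤
      ((a - c + 1 - (t + 1) : ℕ) : ℝ) ^ (t + 1) + (t + 1) * (c + t) * (a : ℝ) ^ t := by
    exact_mod_cast pow_succ_le_pow_succ_add (d := c + t) (by omega) (by omega) t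
  calc (a : ℝ) ^ (t + 1) / (t + 1).factorial
      ≤ (((a - c + 1 - (t + 1) : ℕ) : ℝ) ^ (t + 1) + (t + 1) * (c + t) * (a : ℝ) ^ t) /
          (t + 1).factorial := by gcongr
    _ = ((a - c + 1 - (t + 1) : ℕ) : ℝ) ^ (t + 1) / (t + 1).factorial +
          (t + 1) * (c + t) / (t + 1).factorial * (a : ℝ) ^ t := by ring
    _ ≤ _ := by gcongr

theorem exists_pow_succ_div_factorial_sub_le_choose_sub_one (c t : ℕ) :
    ∃ C : ℝ, ∀ a : ℕ, 1 ≤ a →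
      1 / (t + 1).factorial * (a : ℝ) ^ (t + 1) - C * (a : ℝ) ^ t ≤
        Nat.choose (a - c) (t + 1) - 1 := by
  refine ⟨(t + 1) * (c + t) / (t + 1).factorial + 1, fun a ha => ?_⟩
  have hpow : (1 : ℝ) ≤ (a : ℝ) ^ t := one_le_pow₀ (mod_cast ha)
  have hle := pow_succ_div_factorial_le_choose_sub a c t
  rw [one_div_mul_eq_div, add_mul, one_mul]
  linarith

/-! ### Block sequences -/

/-- A sequence of blocks, each consisting of `m` distinct symbols of the alphabet `A` in a
prescribed order. It encodes a `(0,1)`-matrix with rows the blocks and columns the symbols. -/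
abbrev BlockSeq (m : ℕ) (A : Type*) := List (Fin m ↪ A)

namespace BlockSeq

section Word

variable {A : Type*} {m : ℕ}

/-- The concatenation of the blocks. -/
def word (W : BlockSeq m A) : List A := W.flatMap fun B : Fin m ↪ A => List.ofFn B

theorem word_cons (B : Fin m ↪ A) (W : BlockSeq m A) : word (B :: W) = List.ofFn B ++ word W :=
  List.flatMap_cons

theorem word_append (V W : BlockSeq m A) : word (V ++ W) = word V ++ word W :=
  List.flatMap_append

theorem word_flatMap {I : Type*} (l : List I) (f : I → BlockSeq m A) :
    word (l.flatMap f) = l.flatMap fun i => word (f i) :=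
  List.flatMap_assoc

theorem mem_word {W : BlockSeq m A} {x : A} : x ∈ word W ↔ ∃ B ∈ W, x ∈ Set.range B := by
  simp only [word, List.mem_flatMap, List.mem_ofFn, Set.mem_range]

/-- Any two blocks share at most one symbol. -/
def IsLinear (W : BlockSeq m A) : Prop :=
  W.Pairwise fun B B' : Fin m ↪ A => (Set.range B ∩ Set.range B').Subsingleton

/-- Whenever `a` precedes `b` in a block, all occurrences of `a` in earlier blocks follow those of
`b`, and all occurrences of `a` in later blocks precede those of `b`. -/
def IsNested [DecidableEq A] (W : BlockSeq m A) : Prop :=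
  ∀ P B Q, W = P ++ B :: Q → ∀ i j, i < j →
    altLength (B i) (B j) (word P) ≤ 1 ∧ altLength (B j) (B i) (word Q) ≤ 1

theorem IsLinear.notMem_range {P Q : BlockSeq m A} {B : Fin m ↪ A} (h : IsLinear (P ++ B :: Q))
    {x y : A} (hxy : x ≠ y) (hx : x ∈ Set.range B) (hy : y ∈ Set.range B) :
    (∀ B' ∈ P, ¬ (x ∈ Set.range B' ∧ y ∈ Set.range B')) ∧
      ∀ B' ∈ Q, ¬ (x ∈ Set.range B' ∧ y ∈ Set.range B') := by
  obtain ⟨-, hQ, hP⟩ := List.pairwise_append.1 h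
  exact ⟨fun B' hB' h' => hxy (hP B' hB' B List.mem_cons_self ⟨h'.1, hx⟩ ⟨h'.2, hy⟩),
    fun B' hB' h' => hxy (List.rel_of_pairwise_cons hQ hB' ⟨hx, h'.1⟩ ⟨hy, h'.2⟩)⟩

end Word

/-! ### Composition of block sequences -/

section Compose

variable {A A' : Type*} {N q : ℕ}

/-- Substitution of the symbols of every block of `T` into the block sequence `V`, whose alphabet
is enumerated by `e`. -/
def compose (e : A' ≃ Fin N) (T : BlockSeq N A) (V : BlockSeq q A') : BlockSeq q A :=
  T.flatMap fun B => V.map fun D => D.trans (e.toEmbedding.trans B)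

theorem length_compose (e : A' ≃ Fin N) (T : BlockSeq N A) (V : BlockSeq q A') :
    (compose e T V).length = T.length * V.length := by
  simp [compose, List.length_flatMap]

theorem word_compose (e : A' ≃ Fin N) (T : BlockSeq N A) (V : BlockSeq q A') :
    word (compose e T V) = T.flatMap fun B : Fin N ↪ A => (word V).map (B ∘ e) := by
  rw [compose, word_flatMap]
  simp only [word, List.flatMap_map, List.map_flatMap, List.map_ofFn]
  rfl

theorem exists_equiv_fin_monotone_idxOf [Fintype A'] [DecidableEq A'] (w : List A') :
    ∃ e : A' ≃ Fin (Fintype.card A'), Monotone (w.idxOf ∘ e.symm) :=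
  let e := Fintype.equivFin A'
  ⟨e.trans (Tuple.sort (w.idxOf ∘ e.symm)).symm, Tuple.monotone_sort (w.idxOf ∘ e.symm)⟩

variable [DecidableEq A] {e : A' ≃ Fin N} {T : BlockSeq N A} {V : BlockSeq q A'} {s : ℕ}

theorem altLength_compose_le_of_notMem_range {x y : A}
    (h : ∀ B ∈ T, ¬ (x ∈ Set.range B ∧ y ∈ Set.range B)) :
    altLength x y (word (compose e T V)) ≤ altLength x y (word T) := by
  rw [word_compose]
  refine altLength_flatMap_le_flatMap (g := fun B : Fin N ↪ A => List.ofFn B) (fun B _ => ?_)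
    (by simpa only [List.mem_ofFn, Set.mem_range] using h)
  intro z hz
  obtain ⟨c, -, rfl⟩ := List.mem_map.1 hz
  exact List.mem_ofFn.2 ⟨e c, rfl⟩

variable [DecidableEq A']

theorem altLength_compose_le_of_lt (he : Monotone ((word V).idxOf ∘ e.symm))
    (hV : ∀ x y, x ≠ y → altLength x y (word V) ≤ 2 * s + 1) (hlin : IsLinear T)
    (hnest : IsNested T) {B : Fin N ↪ A} (hB : B ∈ T) {i j : Fin N} (hij : i < j) :
    altLength (B i) (B j) (word (compose e T V)) ≤ 2 * s + 3 ∧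
      altLength (B j) (B i) (word (compose e T V)) ≤ 2 * s + 3 := by
  obtain ⟨P, Q, rfl⟩ := List.append_of_mem hB
  obtain ⟨hP, hQ⟩ := hlin.notMem_range (B.injective.ne hij.ne) ⟨i, rfl⟩ ⟨j, rfl⟩
  obtain ⟨hPij, hQji⟩ := hnest P B Q rfl i j hij
  have hne : e.symm i ≠ e.symm j := e.symm.injective.ne hij.ne
  have hmap : ∀ i j, altLength (B i) (B j) ((word V).map (B ∘ e)) =
      altLength (e.symm i) (e.symm j) (word V) := fun i j => by
    simpa using altLength_map (B.injective.comp e.injective) (e.symm i) (e.symm j) (word V)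
  have hword : word (compose e (P ++ B :: Q) V) =
      word (compose e P V) ++ ((word V).map (B ∘ e) ++ word (compose e Q V)) := by
    simp only [word_compose, List.flatMap_append, List.flatMap_cons]
  rw [hword]
  apply altLength_append_append_le
  · exact (altLength_compose_le_of_notMem_range hP).trans hPij
  · exact (altLength_compose_le_of_notMem_range fun B' hB' h => hQ B' hB' h.symm).trans hQji
  · simpa only [hmap] using altLength_of_idxOf_le hne (he hij.le)
  · simpa only [hmap] using hV _ _ hne
  · simpa only [hmap] using hV _ _ hne.symm

theorem altLength_compose_le (he : Monotone ((word V).idxOf ∘ e.symm))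
    (hV : ∀ x y, x ≠ y → altLength x y (word V) ≤ 2 * s + 1) (hlin : IsLinear T)
    (hnest : IsNested T) (hT : ∀ x y, x ≠ y → altLength x y (word T) ≤ 2 * s + 3) {x y : A}
    (hxy : x ≠ y) : altLength x y (word (compose e T V)) ≤ 2 * s + 3 := by
  by_cases hshare : ∃ B ∈ T, x ∈ Set.range B ∧ y ∈ Set.range B
  · obtain ⟨B, hB, ⟨i, rfl⟩, ⟨j, rfl⟩⟩ := hshare
    rcases lt_or_gt_of_ne (ne_of_apply_ne B hxy) with hij | hji
    · exact (altLength_compose_le_of_lt he hV hlin hnest hB hij).1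
    · exact (altLength_compose_le_of_lt he hV hlin hnest hB hji).2
  · push Not at hshare
    exact (altLength_compose_le_of_notMem_range fun B hB h => hshare B hB h.1 h.2).trans
      (hT x y hxy)

end Compose

/-! ### Shuffling copies of a block sequence into another one -/

section Shuffle

variable {A A' : Type*} {m : ℕ}

/-- The `i`-th block of the `p`-th copy of `L` in `shuffle L T`: the `i`-th block of `L` followed
by the `i`-th symbol of the `p`-th block of `T`. -/
def shuffleBlock (L : BlockSeq m A') (T : BlockSeq L.length A) (p : Fin T.length)
    (i : Fin L.length) : Fin (m + 1) ↪ A ⊕ (Fin T.length × A') where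
  toFun := Fin.snoc (fun j => .inr (p, L.get i j)) (.inl (T.get p i))
  inj' := Fin.snoc_injective_of_injective (fun j j' h => by simpa using h) (by simp)

/-- The `p`-th copy of `L` in `shuffle L T`. -/
def shuffleCopy (L : BlockSeq m A') (T : BlockSeq L.length A) (p : Fin T.length) :
    BlockSeq (m + 1) (A ⊕ (Fin T.length × A')) :=
  (List.finRange L.length).map (shuffleBlock L T p)

/-- One copy of `L`, on fresh symbols, for every block of `T`; the symbols of this block are
distributed over the ends of the blocks of the copy. -/
def shuffle (L : BlockSeq m A') (T : BlockSeq L.length A) :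
    BlockSeq (m + 1) (A ⊕ (Fin T.length × A')) :=
  (List.finRange T.length).flatMap (shuffleCopy L T)

variable {L : BlockSeq m A'} {T : BlockSeq L.length A} {p : Fin T.length}

theorem length_shuffle (L : BlockSeq m A') (T : BlockSeq L.length A) :
    (shuffle L T).length = T.length * L.length := by
  simp [shuffle, shuffleCopy, List.length_flatMap]

theorem shuffleBlock_castSucc (i : Fin L.length) (j : Fin m) :
    shuffleBlock L T p i j.castSucc = .inr (p, L.get i j) := by
  simp only [shuffleBlock, Function.Embedding.coeFn_mk, Fin.snoc_castSucc]

theorem shuffleBlock_last (i : Fin L.length) :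
    shuffleBlock L T p i (Fin.last m) = .inl (T.get p i) := by
  simp only [shuffleBlock, Function.Embedding.coeFn_mk, Fin.snoc_last]

theorem ofFn_shuffleBlock (i : Fin L.length) : List.ofFn (shuffleBlock L T p i) =
    (List.ofFn (L.get i)).map (fun x => .inr (p, x)) ++ [.inl (T.get p i)] := by
  rw [List.ofFn_succ_last, List.map_ofFn]
  simp only [shuffleBlock_castSucc, shuffleBlock_last]
  rfl

theorem inl_mem_range_shuffleBlock {i : Fin L.length} {z : A} :
    .inl z ∈ Set.range (shuffleBlock L T p i) ↔ T.get p i = z := by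
  simp only [Set.mem_range, Fin.exists_fin_succ', shuffleBlock_castSucc, shuffleBlock_last,
    reduceCtorEq, exists_false, false_or, Sum.inl.injEq]

theorem inr_mem_range_shuffleBlock {i : Fin L.length} {q : Fin T.length} {x : A'} :
    .inr (q, x) ∈ Set.range (shuffleBlock L T p i) ↔ p = q ∧ x ∈ Set.range (L.get i) := by
  simp only [Set.mem_range, Fin.exists_fin_succ', shuffleBlock_castSucc, shuffleBlock_last,
    reduceCtorEq, or_false, Sum.inr.injEq, Prod.mk.injEq, exists_and_left]

theorem inr_mem_word_shuffleCopy {q : Fin T.length} {x : A'}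
    (h : .inr (q, x) ∈ word (shuffleCopy L T p)) : p = q := by
  obtain ⟨B, hB, hx⟩ := mem_word.1 h
  obtain ⟨i, -, rfl⟩ := List.mem_map.1 hB
  exact (inr_mem_range_shuffleBlock.1 hx).1

theorem inr_notMem_word_flatMap_shuffleCopy {l : List (Fin T.length)} (hp : p ∉ l) (x : A') :
    .inr (p, x) ∉ word (l.flatMap (shuffleCopy L T)) := by
  intro h
  rw [word_flatMap] at h
  obtain ⟨q, hq, hx⟩ := List.mem_flatMap.1 h
  exact hp (inr_mem_word_shuffleCopy hx ▸ hq)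

theorem inl_notMem_word_map_shuffleBlock {r : List (Fin L.length)} {i : Fin L.length}
    (hi : i ∉ r) : .inl (T.get p i) ∉ word (r.map (shuffleBlock L T p)) := by
  intro h
  obtain ⟨B, hB, hz⟩ := mem_word.1 h
  obtain ⟨i', hi', rfl⟩ := List.mem_map.1 hB
  exact hi ((T.get p).injective (inl_mem_range_shuffleBlock.1 hz) ▸ hi')

theorem filterMap_getRight?_word_map_shuffleBlock (r : List (Fin L.length)) :
    (word (r.map (shuffleBlock L T p))).filterMap Sum.getRight? =
      (word (r.map L.get)).map (Prod.mk p) := by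
  induction r with
  | nil => rfl
  | cons i r ih =>
    rw [List.map_cons, List.map_cons, word_cons, word_cons, ofFn_shuffleBlock,
      List.filterMap_append, List.filterMap_append, ih, List.filterMap_map, List.map_append]
    simp [Function.comp_def]

theorem filterMap_getLeft?_word_map_shuffleBlock (r : List (Fin L.length)) :
    (word (r.map (shuffleBlock L T p))).filterMap Sum.getLeft? = r.map (T.get p) := by
  induction r with
  | nil => rfl
  | cons i r ih =>
    rw [List.map_cons, List.map_cons, word_cons, ofFn_shuffleBlock, List.filterMap_append,
      List.filterMap_append, ih, List.filterMap_map]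
    simp [Function.comp_def]

theorem filterMap_getLeft?_word_shuffleCopy :
    (word (shuffleCopy L T p)).filterMap Sum.getLeft? = List.ofFn (T.get p) := by
  rw [shuffleCopy, filterMap_getLeft?_word_map_shuffleBlock, List.ofFn_eq_map]

theorem filterMap_getLeft?_word_shuffle :
    (word (shuffle L T)).filterMap Sum.getLeft? = word T := by
  rw [shuffle, word_flatMap, List.filterMap_flatMap]
  simp only [filterMap_getLeft?_word_shuffleCopy]
  rw [word, ← List.map_get_finRange T, List.flatMap_map, List.map_get_finRange]

theorem isLinear_shuffleCopy (hL : IsLinear L) : IsLinear (shuffleCopy L T p) := by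
  refine List.pairwise_map.2 ((List.pairwise_lt_finRange _).imp fun {i i'} hlt => ?_)
  have hinl : ∀ {z}, .inl z ∈ Set.range (shuffleBlock L T p i) →
      .inl z ∉ Set.range (shuffleBlock L T p i') := fun hz hz' =>
    hlt.ne ((T.get p).injective ((inl_mem_range_shuffleBlock.1 hz).trans
      (inl_mem_range_shuffleBlock.1 hz').symm))
  rintro (z | ⟨q, x⟩) ⟨hx, hx'⟩ (z | ⟨q', y⟩) ⟨hy, hy'⟩
  · exact absurd hx' (hinl hx)
  · exact absurd hx' (hinl hx)
  · exact absurd hy' (hinl hy)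
  · rw [inr_mem_range_shuffleBlock] at hx hx' hy hy'
    obtain rfl := hx.1
    obtain rfl := hy.1
    rw [List.pairwise_iff_get.1 hL i i' hlt ⟨hx.2, hx'.2⟩ ⟨hy.2, hy'.2⟩]

theorem isLinear_shuffle (hL : IsLinear L) : IsLinear (shuffle L T) := by
  refine List.pairwise_flatMap.2 ⟨fun p _ => isLinear_shuffleCopy hL,
    (List.nodup_finRange _).imp fun {p q} hpq => ?_⟩
  simp only [shuffleCopy, List.forall_mem_map]
  intro i _ j _
  have hinr : ∀ {c}, .inr c ∈ Set.range (shuffleBlock L T p i) →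
      .inr c ∉ Set.range (shuffleBlock L T q j) := fun hc hc' =>
    hpq ((inr_mem_range_shuffleBlock.1 hc).1.trans (inr_mem_range_shuffleBlock.1 hc').1.symm)
  rintro (z | c) ⟨hx, hx'⟩ (z' | c') ⟨hy, hy'⟩
  · rw [← inl_mem_range_shuffleBlock.1 hx, inl_mem_range_shuffleBlock.1 hy]
  · exact absurd hy' (hinr hy)
  · exact absurd hx' (hinr hx)
  · exact absurd hx' (hinr hx)

theorem exists_of_shuffle_eq_append_cons {P Q : BlockSeq (m + 1) (A ⊕ (Fin T.length × A'))}
    {D : Fin (m + 1) ↪ A ⊕ (Fin T.length × A')} (h : shuffle L T = P ++ D :: Q) :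
    ∃ l₁ p l₂ r₁ i r₂, List.finRange T.length = l₁ ++ p :: l₂ ∧
      List.finRange L.length = r₁ ++ i :: r₂ ∧ D = shuffleBlock L T p i ∧
      P = l₁.flatMap (shuffleCopy L T) ++ r₁.map (shuffleBlock L T p) ∧
      Q = r₂.map (shuffleBlock L T p) ++ l₂.flatMap (shuffleCopy L T) := by
  obtain ⟨l₁, p, l₂, P', Q', hl, hcopy, rfl, rfl⟩ := exists_of_flatMap_eq_append_cons h
  obtain ⟨r₁, r, hr, rfl, hr'⟩ := List.map_eq_append_iff.1 hcopy
  obtain ⟨i, r₂, rfl, rfl, rfl⟩ := List.map_eq_cons_iff.1 hr'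
  exact ⟨l₁, p, l₂, r₁, i, r₂, hl, hr, rfl, rfl, rfl⟩

variable [DecidableEq A] [DecidableEq A']

theorem altLength_inr_inr_word_map_shuffleBlock (r : List (Fin L.length)) (x y : A') :
    altLength (.inr (p, x)) (.inr (p, y)) (word (r.map (shuffleBlock L T p))) =
      altLength x y (word (r.map L.get)) := by
  rw [← altLength_filterMap (g := Sum.getRight?) (fun _ => Sum.getRight?_eq_some_iff)
      (fun _ => Sum.getRight?_eq_some_iff), filterMap_getRight?_word_map_shuffleBlock,
    altLength_map (Prod.mk_right_injective p)]

theorem isNested_shuffle (hL : IsNested L) : IsNested (shuffle L T) := by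
  intro P D Q hsplit i' j' hij
  obtain ⟨l₁, p, l₂, r₁, i, r₂, hl, hr, rfl, rfl, rfl⟩ := exists_of_shuffle_eq_append_cons hsplit
  obtain ⟨hl₁, hl₂⟩ := notMem_of_nodup_append_cons (hl ▸ List.nodup_finRange T.length)
  obtain ⟨hr₁, hr₂⟩ := notMem_of_nodup_append_cons (hr ▸ List.nodup_finRange L.length)
  have hLsplit : L = r₁.map L.get ++ L.get i :: r₂.map L.get := by
    rw [← List.map_cons, ← List.map_append, ← hr, List.map_get_finRange]
  obtain ⟨a, rfl⟩ := Fin.exists_castSucc_eq.2 (hij.trans_le (Fin.le_last j')).ne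
  rw [word_append, word_append, shuffleBlock_castSucc,
    altLength_append_of_notMem_left (inr_notMem_word_flatMap_shuffleCopy hl₁ _)]
  rcases Fin.eq_castSucc_or_eq_last j' with ⟨b, rfl⟩ | rfl
  · rw [shuffleBlock_castSucc,
      altLength_append_of_notMem_right _ (inr_notMem_word_flatMap_shuffleCopy hl₂ _)
        (inr_notMem_word_flatMap_shuffleCopy hl₂ _),
      altLength_inr_inr_word_map_shuffleBlock, altLength_inr_inr_word_map_shuffleBlock]
    exact hL _ _ _ hLsplit a b (Fin.castSucc_lt_castSucc_iff.1 hij)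
  · rw [shuffleBlock_last,
      altLength_append_of_notMem_left (inl_notMem_word_map_shuffleBlock hr₂)]
    exact ⟨altLength_le_one_of_notMem (inl_notMem_word_map_shuffleBlock hr₁),
      altLength_le_one_of_notMem (inr_notMem_word_flatMap_shuffleCopy hl₂ _)⟩

theorem altLength_inl_inl_word_shuffle (x y : A) :
    altLength (.inl x) (.inl y) (word (shuffle L T)) = altLength x y (word T) := by
  rw [← altLength_filterMap (g := Sum.getLeft?) (fun _ => Sum.getLeft?_eq_some_iff)
      (fun _ => Sum.getLeft?_eq_some_iff), filterMap_getLeft?_word_shuffle]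

theorem altLength_inr_inl_word_shuffle_le (c : Fin T.length × A') (z : A) :
    altLength (.inr c) (.inl z) (word (shuffle L T)) ≤ 5 ∧
      altLength (.inl z) (.inr c) (word (shuffle L T)) ≤ 5 := by
  obtain ⟨p, x⟩ := c
  have hnodup := List.nodup_iff_count_le_one.1 (List.nodup_ofFn.2 (T.get p).injective) z
  have hcount := count_filterMap_of_forall_iff (a := .inl z)
    (fun _ : A ⊕ (Fin T.length × A') => Sum.getLeft?_eq_some_iff) (word (shuffleCopy L T p))
  rw [filterMap_getLeft?_word_shuffleCopy] at hcount
  rw [shuffle, word_flatMap]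
  refine altLength_flatMap_le (List.nodup_finRange _) (List.mem_finRange p)
    (fun q => inr_mem_word_shuffleCopy) ?_ ?_
  · have := altLength_le_two_mul_count_add_one (.inr (p, x)) (.inl z) (word (shuffleCopy L T p))
    omega
  · have := altLength_le_two_mul_count (.inl z) (.inr (p, x)) (word (shuffleCopy L T p))
    omega

theorem altLength_inr_inr_word_shuffle_self (x y : A') :
    altLength (.inr (p, x)) (.inr (p, y)) (word (shuffle L T)) = altLength x y (word L) := by
  rw [shuffle, word_flatMap, altLength_flatMap_eq (List.nodup_finRange _) (List.mem_finRange p)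
    (fun q => inr_mem_word_shuffleCopy) (fun q => inr_mem_word_shuffleCopy), shuffleCopy,
    altLength_inr_inr_word_map_shuffleBlock, List.map_get_finRange]

theorem altLength_inr_inr_word_shuffle_le {q : Fin T.length} (hpq : p ≠ q) (x y : A') :
    altLength (.inr (p, x)) (.inr (q, y)) (word (shuffle L T)) ≤ 3 := by
  have hq : .inr (q, y) ∉ word (shuffleCopy L T p) := fun h => hpq (inr_mem_word_shuffleCopy h)
  rw [shuffle, word_flatMap]
  exact (altLength_flatMap_le (k := 1) (List.nodup_finRange _) (List.mem_finRange p)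
    (fun q => inr_mem_word_shuffleCopy) (altLength_le_one_of_notMem hq)
    (by simp [altLength_eq_zero_of_notMem hq])).1

theorem altLength_shuffle_le {s : ℕ} (hs : 5 ≤ s)
    (hL : ∀ x y, x ≠ y → altLength x y (word L) ≤ s)
    (hT : ∀ x y, x ≠ y → altLength x y (word T) ≤ s) {x y : A ⊕ (Fin T.length × A')}
    (hxy : x ≠ y) : altLength x y (word (shuffle L T)) ≤ s := by
  rcases x with x | c <;> rcases y with y | d
  · exact (altLength_inl_inl_word_shuffle x y).trans_le (hT x y (ne_of_apply_ne _ hxy))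
  · exact (altLength_inr_inl_word_shuffle_le d x).2.trans hs
  · exact (altLength_inr_inl_word_shuffle_le c y).1.trans hs
  · obtain ⟨p, x⟩ := c
    obtain ⟨q, y⟩ := d
    rcases eq_or_ne p q with rfl | hpq
    · refine (altLength_inr_inr_word_shuffle_self x y).trans_le (hL x y ?_)
      rintro rfl
      exact hxy rfl
    · have := altLength_inr_inr_word_shuffle_le (L := L) hpq x y
      omega

end Shuffle

/-! ### Block systems -/

section BlockSystem

variable {A A₁ A₂ A₃ : Type} [Fintype A] [Fintype A₁] [Fintype A₂] [Fintype A₃] [DecidableEq A]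
  [DecidableEq A₁] [DecidableEq A₂] [DecidableEq A₃] {m N t μ ν : ℕ}

/-- A block sequence in which symbols occur `μ` times on average and pairs of symbols alternate
at most `2 * t + 3` times, built by the `t`-th level of the recursive construction. Level `0` is a
base case, which is neither linear nor nested. -/
structure IsBlockSystem (t μ : ℕ) (W : BlockSeq m A) : Prop where
  card_mul : Fintype.card A * μ = m * W.length
  altLength_le : ∀ x y, x ≠ y → altLength x y (word W) ≤ 2 * t + 3
  isLinear : t ≠ 0 → IsLinear W
  isNested : t ≠ 0 → IsNested W

theorem isBlockSystem_singleton (t : ℕ) (h : m * μ = m) :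
    IsBlockSystem t μ [Function.Embedding.refl (Fin m)] where
  card_mul := by simpa using h
  altLength_le x y _ := by
    have hcount : (word [Function.Embedding.refl (Fin m)]).count x ≤ 1 :=
      List.nodup_iff_count_le_one.1 (by
        simp [word, List.nodup_ofFn, Function.Embedding.injective]) x
    have hle := altLength_le_two_mul_count x y (word [Function.Embedding.refl (Fin m)])
    omega
  isLinear _ := List.pairwise_singleton _ _
  isNested _ P B Q h i j _ := by
    obtain ⟨rfl, hQ⟩ | ⟨-, hQ⟩ := List.append_eq_singleton_iff.1 h.symm
    · obtain ⟨-, rfl⟩ := List.cons.inj hQ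
      exact ⟨Nat.zero_le 1, Nat.zero_le 1⟩
    · exact absurd hQ (List.cons_ne_nil B Q)

theorem isBlockSystem_refl_rev (m : ℕ) :
    IsBlockSystem 0 2 [Function.Embedding.refl (Fin m), Fin.revPerm.toEmbedding] where
  card_mul := by simp
  altLength_le x y hxy := by
    have hword : word [Function.Embedding.refl (Fin m), Fin.revPerm.toEmbedding] =
        List.finRange m ++ (List.finRange m).reverse := by
      simp [word, List.ofFn_eq_map, List.finRange_reverse, Function.Embedding.coe_refl]
    rw [hword]
    exact altLength_append_reverse_le (List.nodup_finRange m) hxy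
  isLinear h := absurd rfl h
  isNested h := absurd rfl h

theorem IsBlockSystem.shuffle_compose {L : BlockSeq m A₁} {V : BlockSeq L.length A₂}
    {T : BlockSeq N A₃} {e : A₂ ≃ Fin N} (he : Monotone ((word V).idxOf ∘ e.symm))
    (hL : IsBlockSystem (t + 1) (μ * ν) L) (hV : IsBlockSystem t μ V)
    (hT : IsBlockSystem (t + 1) ν T) :
    IsBlockSystem (t + 1) (μ * ν) (shuffle L (compose e T V)) where
  card_mul := by
    have hN : Fintype.card A₂ = N := by simpa using Fintype.card_congr e
    rw [Fintype.card_sum, Fintype.card_prod, Fintype.card_fin, length_shuffle, length_compose]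
    calc (Fintype.card A₃ + T.length * V.length * Fintype.card A₁) * (μ * ν)
        = Fintype.card A₃ * ν * μ
          + T.length * V.length * (Fintype.card A₁ * (μ * ν)) := by ring
      _ = T.length * (Fintype.card A₂ * μ) + T.length * V.length * (m * L.length) := by
          rw [hT.card_mul, hL.card_mul, hN]; ring
      _ = (m + 1) * (T.length * V.length * L.length) := by rw [hV.card_mul]; ring
  altLength_le x y := altLength_shuffle_le (by omega) hL.altLength_le fun a b =>
    altLength_compose_le he hV.altLength_le (hT.isLinear t.succ_ne_zero)
      (hT.isNested t.succ_ne_zero) hT.altLength_le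
  isLinear h := isLinear_shuffle (hL.isLinear h)
  isNested h := isNested_shuffle (hL.isNested h)

/-- There is a block system with blocks of length `m` and with at least one and at most `b` blocks
and at most `b` symbols. -/
def HasBlockSystem (t μ m b : ℕ) : Prop :=
  ∃ (A : Type) (_ : Fintype A) (_ : DecidableEq A) (W : BlockSeq m A),
    IsBlockSystem t μ W ∧ 0 < W.length ∧ Fintype.card A ≤ b ∧ W.length ≤ b

theorem HasBlockSystem.mono {b b' : ℕ} (h : HasBlockSystem t μ m b) (hb : b ≤ b') :
    HasBlockSystem t μ m b' := by
  obtain ⟨A, _, _, W, hW, hW₀, hA, hWb⟩ := h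
  exact ⟨A, _, _, W, hW, hW₀, hA.trans hb, hWb.trans hb⟩

theorem hasBlockSystem_of_mul_eq (t : ℕ) (h : m * μ = m) : HasBlockSystem t μ m (max m 1) :=
  ⟨Fin m, _, _, _, isBlockSystem_singleton t h, by simp, by simp, by simp⟩

theorem hasBlockSystem_zero_two (m : ℕ) : HasBlockSystem 0 2 m (m + 2) :=
  ⟨Fin m, _, _, _, isBlockSystem_refl_rev m, by simp, by simp, by simp⟩

theorem HasBlockSystem.succ {f : ℕ → ℕ} (hf : Monotone f) {x : ℕ}
    (hL : HasBlockSystem (t + 1) (μ * ν) m x) (hV : ∀ b, HasBlockSystem t μ b (f b))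
    (hT : ∀ N, HasBlockSystem (t + 1) ν N (f N)) :
    HasBlockSystem (t + 1) (μ * ν) (m + 1) (f (f x) + f (f x) * f x * x) := by
  obtain ⟨A₁, _, _, L, hL, hL₀, hA₁, hLx⟩ := hL
  obtain ⟨A₂, _, _, V, hV, hV₀, hA₂, hVx⟩ := hV L.length
  obtain ⟨A₃, _, _, T, hT, hT₀, hA₃, hTx⟩ := hT (Fintype.card A₂)
  obtain ⟨e, he⟩ := exists_equiv_fin_monotone_idxOf (word V)
  replace hVx := hVx.trans (hf hLx)
  have hA₂x := hf (hA₂.trans (hf hLx))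
  refine ⟨_, inferInstance, inferInstance, _, hL.shuffle_compose he hV hT, ?_, ?_, ?_⟩
  · rw [length_shuffle, length_compose]
    positivity
  · rw [Fintype.card_sum, Fintype.card_prod, Fintype.card_fin, length_compose]
    gcongr
    exacts [hA₃.trans hA₂x, hTx.trans hA₂x]
  · rw [length_shuffle, length_compose]
    refine le_add_left ?_
    gcongr
    exact hTx.trans hA₂x

theorem hasBlockSystem_sizeBound (t k m : ℕ) :
    HasBlockSystem t (2 ^ Nat.choose k t) m (sizeBound k m) := by
  induction t generalizing k m with
  | zero => simpa using (hasBlockSystem_zero_two m).mono (add_two_le_sizeBound k m)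
  | succ t iht =>
    have hmax : ∀ k m, max m 1 ≤ sizeBound k m := fun k m =>
      (by omega : max m 1 ≤ m + 2).trans (add_two_le_sizeBound k m)
    induction k generalizing m with
    | zero => exact (hasBlockSystem_of_mul_eq _ (by simp)).mono (hmax 0 m)
    | succ k ihk =>
      induction m with
      | zero => exact (hasBlockSystem_of_mul_eq _ (zero_mul _)).mono (hmax (k + 1) 0)
      | succ m ihm =>
        rw [Nat.choose_succ_succ, pow_add] at ihm ⊢
        exact (ihm.succ (monotone_sizeBound k) (iht k) ihk).mono
          (add_mul_mul_le_sizeBound k m rfl rfl rfl)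

end BlockSystem

/-! ### Disjoint copies -/

section Copies

variable {A : Type*} {m q : ℕ} {W : BlockSeq m A} {p : Fin q}

/-- The concatenation of `q` copies of `W` on disjoint alphabets. -/
def copies (q : ℕ) (W : BlockSeq m A) : BlockSeq m (Fin q × A) :=
  (List.finRange q).flatMap fun p => W.map fun B => B.trans (Function.Embedding.sectR p A)

theorem length_copies (q : ℕ) (W : BlockSeq m A) : (copies q W).length = q * W.length := by
  simp [copies, List.length_flatMap]

theorem word_copies : word (copies q W) = (List.finRange q).flatMap fun p =>
    (word W).map (Prod.mk p) := by
  rw [copies, word_flatMap]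
  simp only [word, List.flatMap_map, List.map_flatMap, List.map_ofFn]
  rfl

theorem altLength_copies_le [DecidableEq A] {s : ℕ} (hs : 3 ≤ s)
    (hW : ∀ x y, x ≠ y → altLength x y (word W) ≤ s) {x y : Fin q × A} (hxy : x ≠ y) :
    altLength x y (word (copies q W)) ≤ s := by
  obtain ⟨p, x⟩ := x
  obtain ⟨p', y⟩ := y
  have hmem : ∀ {r r' : Fin q} {z : A}, (r, z) ∈ (word W).map (Prod.mk r') → r' = r := by
    intro r r' z h
    obtain ⟨z, -, hz⟩ := List.mem_map.1 h
    exact congrArg Prod.fst hz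
  rw [word_copies]
  rcases eq_or_ne p p' with rfl | hp
  · rw [altLength_flatMap_eq (List.nodup_finRange q) (List.mem_finRange p) (fun _ => hmem)
      (fun _ => hmem), altLength_map (Prod.mk_right_injective p)]
    exact hW x y (ne_of_apply_ne _ hxy)
  · have hy : (p', y) ∉ (word W).map (Prod.mk p) := fun h => hp (hmem h)
    exact (altLength_flatMap_le (k := 1) (List.nodup_finRange q) (List.mem_finRange p)
      (fun _ => hmem) (altLength_le_one_of_notMem hy)
      (by simp [altLength_eq_zero_of_notMem hy])).1.trans hs

end Copies

/-! ### The matrix of a block sequence -/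

section IncidenceMatrix

variable {A : Type*} {m n : ℕ} {W : BlockSeq m A}

/-- The `(0,1)`-matrix recording which symbols lie in which block: the `r`-th block of `W` is
placed in row `ρ r` and the symbol `x` in column `ι x`. -/
noncomputable def incidenceMatrix (W : BlockSeq m A) (ρ : Fin W.length ↪o Fin n) (ι : A ↪ Fin n) :
    Fin n → Fin n → Bool :=
  open Classical in fun i j => decide (∃ r c, ρ r = i ∧ ι (W.get r c) = j)

variable {ρ : Fin W.length ↪o Fin n} {ι : A ↪ Fin n}

theorem incidenceMatrix_eq_true {i j : Fin n} :
    incidenceMatrix W ρ ι i j = true ↔ ∃ r c, ρ r = i ∧ ι (W.get r c) = j := by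
  simp only [incidenceMatrix, decide_eq_true_eq]

theorem length_mul_le_matOnes_incidenceMatrix (ρ : Fin W.length ↪o Fin n) (ι : A ↪ Fin n) :
    W.length * m ≤ matOnes (incidenceMatrix W ρ ι) := by
  let f (p : Fin W.length × Fin m) :
      {p : Fin n × Fin n // incidenceMatrix W ρ ι p.1 p.2 = true} :=
    ⟨(ρ p.1, ι (W.get p.1 p.2)), incidenceMatrix_eq_true.2 ⟨p.1, p.2, rfl, rfl⟩⟩
  have hf : Function.Injective f := by
    rintro ⟨r, c⟩ ⟨r', c'⟩ h
    obtain ⟨hr, hc⟩ := Prod.ext_iff.1 (Subtype.ext_iff.1 h)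
    obtain rfl : r = r' := ρ.injective hr
    exact congrArg (Prod.mk r) ((W.get r).injective (ι.injective hc))
  simpa [matOnes] using Nat.card_le_card_of_injective f hf

theorem ofFn_sublist_word {r : ℕ} {x : Fin r → A} {row : Fin r → Fin W.length}
    (hrow : StrictMono row) (hx : ∀ i, x i ∈ Set.range (W.get (row i))) :
    (List.ofFn x).Sublist (word W) := by
  have hrows : (List.ofFn fun i => W.get (row i)).Sublist W :=
    List.sublist_iff_exists_fin_orderEmbedding_get_eq.2
      ⟨(Fin.castOrderIso (by simp)).toOrderEmbedding.trans (OrderEmbedding.ofStrictMono row hrow),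
        fun i => by rw [List.get_ofFn]; rfl⟩
  calc (List.ofFn x).Sublist ((List.finRange r).flatMap fun i => List.ofFn (W.get (row i))) := by
        rw [List.ofFn_eq_map, List.map_eq_flatMap]
        exact List.Sublist.flatMap_right _ fun i _ =>
          List.singleton_sublist.2 (List.mem_ofFn.2 (hx i))
    _ = word (List.ofFn fun i => W.get (row i)) := by
        rw [word, List.ofFn_eq_map, List.flatMap_map]
    List.Sublist _ (word W) := hrows.flatMap _

theorem not_isFull_incidenceMatrix [DecidableEq A] {k : ℕ} (hk : 2 ≤ k)
    (hW : ∀ x y, x ≠ y → altLength x y (word W) ≤ k) :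
    ¬ IsFull k (incidenceMatrix W ρ ι) := by
  rintro ⟨c, hc, hfull⟩
  have hsymbol : ∀ b, ∃ x, ι x = c b := fun b => by
    obtain ⟨r, -, hr⟩ := hfull 1
    obtain ⟨_, _, -, h⟩ := incidenceMatrix_eq_true.1 (hr b)
    exact ⟨_, h⟩
  choose x hx using hsymbol
  have hx_inj : Function.Injective x := fun b b' h => hc.injective (by rw [← hx, ← hx, h])
  have hcard : (Finset.univ.image x).card = k := by
    rw [Finset.card_image_of_injective _ hx_inj, Finset.card_fin]
  obtain ⟨a, -, b, -, hab, halt⟩ :=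
    exists_card_add_one_le_altLength (w := word W) (hcard.symm ▸ hk) fun l hl hlx => by
      obtain ⟨σ, rfl⟩ := exists_perm_eq_ofFn_comp hx_inj hl hlx
      obtain ⟨r, hr, hM⟩ := hfull σ.symm
      have hblock : ∀ i, ∃ s, ρ s = r i ∧ x (σ i) ∈ Set.range (W.get s) := fun i => by
        obtain ⟨s, c', hs, hc'⟩ := incidenceMatrix_eq_true.1 (hM (σ i))
        exact ⟨s, by rw [hs, σ.symm_apply_apply], c', ι.injective (hc'.trans (hx _).symm)⟩
      choose row hrow hmem using hblock
      exact ofFn_sublist_word (fun i j hij => ρ.lt_iff_lt.1 (by simpa only [hrow] using hr hij))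
        hmem
  have := hW a b hab
  omega

end IncidenceMatrix

/-! ### The lower bound -/

theorem hasBlockSystem_two_pow_choose_invAck {t n : ℕ} (ht : t ≠ 0) (hn : 1 ≤ n) :
    HasBlockSystem t (2 ^ Nat.choose (invAck n - 6) t)
      (2 ^ Nat.choose (invAck n - 6) t) n := by
  rcases lt_or_ge (invAck n) 6 with h6 | h6
  · rw [Nat.sub_eq_zero_of_le h6.le, Nat.choose_eq_zero_of_lt (Nat.pos_of_ne_zero ht), pow_zero]
    exact (hasBlockSystem_of_mul_eq t (mul_one 1)).mono hn
  · have hlt : ack (invAck n - 6 + 6) 0 < n := ack_zero_lt_of_le_invAck (by omega)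
    exact (hasBlockSystem_sizeBound t _ _).mono
      ((sizeBound_two_pow_choose_le _ t).trans hlt.le)

theorem HasBlockSystem.exists_not_isFull_and_mul_le {t μ n k : ℕ} (h : HasBlockSystem t μ μ n)
    (hμ : 0 < μ) (hk : 2 * t + 3 ≤ k) :
    ∃ M : Fin n → Fin n → Bool, ¬ IsFull k M ∧ n * μ ≤ 2 * matOnes M := by
  obtain ⟨A, _, _, W, hW, hW₀, hA, -⟩ := h
  have hAW : Fintype.card A = W.length :=
    Nat.eq_of_mul_eq_mul_right hμ (hW.card_mul.trans (mul_comm _ _))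
  rw [hAW] at hA
  set q := n / W.length
  have hqn : q * W.length ≤ n := Nat.div_mul_le_self n W.length
  have hnq : n ≤ 2 * (q * W.length) := by
    have hlt : n < q * W.length + W.length := Nat.lt_div_mul_add hW₀
    have hle : W.length ≤ q * W.length := Nat.le_mul_of_pos_left _ (Nat.div_pos hA hW₀)
    omega
  obtain ⟨ι⟩ : Nonempty (Fin q × A ↪ Fin n) :=
    Function.Embedding.nonempty_of_card_le (by simpa [hAW] using hqn)
  have hlen : (copies q W).length = q * W.length := length_copies q W
  let M := incidenceMatrix (copies q W) (Fin.castLEOrderEmb (hlen.trans_le hqn)) ι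
  have hM : q * W.length * μ ≤ matOnes M := calc
    q * W.length * μ = (copies q W).length * μ := by rw [hlen]
    _ ≤ matOnes M := length_mul_le_matOnes_incidenceMatrix _ ι
  refine ⟨M, not_isFull_incidenceMatrix (by omega) fun x y hxy => ?_, ?_⟩
  · exact (altLength_copies_le (by omega) hW.altLength_le hxy).trans hk
  · calc n * μ ≤ 2 * (q * W.length) * μ := by gcongr
      _ = 2 * (q * W.length * μ) := mul_assoc _ _ _
      _ ≤ 2 * matOnes M := by gcongr

end BlockSeq

/-- For every `k ≥ 4`, with `t = ⌊(k−2)/2⌋`, there is a constant `C_k`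
such that for every `n ≥ 1` there is an `n × n` (0,1)-matrix that is not `(k+1)`-full with
at least `n·2^((1/t!)·α(n)^t − C_k·α(n)^(t−1))` `1`-entries. -/
theorem pk_lower_bound :
    ∀ k : ℕ, 4 ≤ k → ∃ C : ℝ, ∀ n : ℕ, 1 ≤ n →
      ∃ M : Fin n → Fin n → Bool, ¬ IsFull (k + 1) M ∧
        (n : ℝ) * (2 : ℝ) ^
          ((1 / (Nat.factorial ((k - 2) / 2) : ℝ)) * (invAck n : ℝ) ^ ((k - 2) / 2)
            - C * (invAck n : ℝ) ^ ((k - 2) / 2 - 1)) ≤ (matOnes M : ℝ) := by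
  intro k hk
  obtain ⟨t, ht⟩ := Nat.exists_eq_add_one.2 (by omega : 0 < (k - 2) / 2)
  simp only [ht, Nat.add_sub_cancel]
  obtain ⟨C, hC⟩ := exists_pow_succ_div_factorial_sub_le_choose_sub_one 6 t
  refine ⟨C, fun n hn => ?_⟩
  obtain ⟨M, hM, hones⟩ :=
    (BlockSeq.hasBlockSystem_two_pow_choose_invAck t.succ_ne_zero hn).exists_not_isFull_and_mul_le
      (Nat.two_pow_pos _) (by omega : 2 * (t + 1) + 3 ≤ k + 1)
  refine ⟨M, hM, ?_⟩
  have hones' : (n : ℝ) * 2 ^ Nat.choose (invAck n - 6) (t + 1) ≤ 2 * matOnes M := mod_cast hones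
  calc (n : ℝ) * 2 ^ (1 / ((t + 1).factorial : ℝ) * (invAck n : ℝ) ^ (t + 1)
        - C * (invAck n : ℝ) ^ t)
      ≤ n * 2 ^ ((Nat.choose (invAck n - 6) (t + 1) : ℝ) - 1) :=
        mul_le_mul_of_nonneg_left (Real.rpow_le_rpow_of_exponent_le one_le_two
          (hC _ (invAck_pos n))) n.cast_nonneg
    _ = n * 2 ^ Nat.choose (invAck n - 6) (t + 1) / 2 := by
        rw [Real.rpow_sub_one two_ne_zero, Real.rpow_natCast, mul_div_assoc]
    _ ≤ matOnes M := by linarith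
end

section
/- For every integer s ≥ 2 there exists a constant c_s such that for all integers d ≥ 2, r ≥ 2, and m ≥ k ≥ D_s(d), every (0,1)-matrix with m rows, at least k 1-entries in every column, and containing no doubled (r,s)-formation has at most c_s·r·m·α_d(m)^{s−2} columns; in other words, Δ_{r,s,k}(m) ≤ c_s·r·m·α_d(m)^{s−2}. -/
/-!
A column is the finite set of rows of its `1`-entries. A parameter `ε` treats plain formations
(`ε = 0`, thresholds `R_s(d)`) and doubled ones (`ε = 1`, thresholds `D_s(d)`) together; both are
bounded by induction on `s` and `d`.

Cut the rows into blocks. A column with all its entries in one block is bounded by recursion on the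
number of rows. If a column has many entries in one block and also an entry below (or above) it,
then after dropping its `ε` extreme entries in that block, an `(r, s-1)`-formation inside the block
would extend to an `(r, s)`-formation: the outside entry supplies the new end interval, and the
dropped entries bring the former end interval up to the full quota. With entries on both sides of
the block, an `(r, s-2)`-formation extends in the same way. Every other column is spread over many
blocks, or has many blocks with more than `ε` entries. Contracting each block to one row then gives
a matrix to which the bound for `d - 1` applies, where in the second case a plain formation of heavy
blocks is already a formation of the original matrix. The recursions for `R_s(d)` and `D_s(d)` say
exactly that no column escapes this classification. With `16 α_{d-1}(m)^(s-2)` rows per block the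
contracted matrices contribute only `O(r m)` columns.
-/

namespace DoubledFormation

open Finset

section Blocks

variable {α : Type*}

/-- The part of the column `F` lying in the `i`-th block of the row partition given by the fibres
of `β`. A column of a `(0,1)`-matrix is encoded as the finite set of rows of its `1`-entries. -/
def block (β : α → ℕ) (F : Finset α) (i : ℕ) : Finset α := {x ∈ F | β x = i}

variable {β : α → ℕ} {F G : Finset α} {i : ℕ}

@[simp]
lemma mem_block {x : α} : x ∈ block β F i ↔ x ∈ F ∧ β x = i := mem_filter

lemma block_subset : block β F i ⊆ F := filter_subset _ _

lemma block_mono (h : F ⊆ G) : block β F i ⊆ block β G i := filter_subset_filter _ h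

lemma card_eq_sum_card_block (β : α → ℕ) (F : Finset α) :
    #F = ∑ i ∈ F.image β, #(block β F i) :=
  card_eq_sum_card_image β F

end Blocks

section Trimming

variable {α : Type*} [LinearOrder α]

lemma strictMonoOn_card_filter_lt (F : Finset α) :
    StrictMonoOn (fun x ↦ #{y ∈ F | y < x}) F := fun x hx x' _ hlt ↦ by
  refine card_lt_card <| Finset.ssubset_iff_subset_ne.2
    ⟨monotone_filter_right F fun y _ hy ↦ hy.trans hlt, fun heq ↦ ?_⟩
  have : x ∈ ({y ∈ F | y < x} : Finset α) := heq ▸ mem_filter.2 ⟨hx, hlt⟩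
  exact lt_irrefl x (mem_filter.1 this).2

/-- The column `F` without its `n` lowest entries. -/
def dropLow (n : ℕ) (F : Finset α) : Finset α := {x ∈ F | n ≤ #{y ∈ F | y < x}}

/-- The column `F` without its `n` highest entries. -/
def dropHigh (n : ℕ) (F : Finset α) : Finset α := {x ∈ F | n ≤ #{y ∈ F | x < y}}

variable {n : ℕ} {F G : Finset α}

lemma dropLow_subset : dropLow n F ⊆ F := filter_subset _ _

lemma dropHigh_subset : dropHigh n F ⊆ F := filter_subset _ _

lemma card_le_card_dropLow_add (n : ℕ) (F : Finset α) : #F ≤ #(dropLow n F) + n := by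
  have hsplit := card_filter_add_card_filter_not (s := F) (fun x ↦ n ≤ #{y ∈ F | y < x})
  have hrest : #{x ∈ F | ¬ n ≤ #{y ∈ F | y < x}} ≤ #(range n) :=
    card_le_card_of_injOn (fun x ↦ #{y ∈ F | y < x})
      (fun x hx ↦ by simpa using (mem_filter.1 hx).2)
      ((strictMonoOn_card_filter_lt F).injOn.mono fun x hx ↦ (mem_filter.1 hx).1)
  rw [card_range] at hrest
  unfold dropLow
  omega

lemma lt_of_mem_sdiff_dropLow {a b : α} (ha : a ∈ F \ dropLow n F) (hb : b ∈ dropLow n F) :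
    a < b := by
  by_contra! hba
  have hmono : #{y ∈ F | y < b} ≤ #{y ∈ F | y < a} :=
    card_le_card <| monotone_filter_right F fun y _ hy ↦ hy.trans_le hba
  rw [mem_sdiff] at ha
  exact ha.2 <| mem_filter.2 ⟨ha.1, (mem_filter.1 hb).2.trans hmono⟩

lemma le_card_sdiff_dropLow (hn : n ≤ #F) : n ≤ #(F \ dropLow n F) := by
  rcases (dropLow n F).eq_empty_or_nonempty with hempty | hne
  · simpa [hempty] using hn
  · have hmin := (dropLow n F).min'_mem hne
    refine (mem_filter.1 hmin).2.trans <| card_le_card fun y hy ↦ ?_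
    rw [mem_filter] at hy
    exact mem_sdiff.2 ⟨hy.1, fun hy' ↦ (((dropLow n F).min'_le y hy').trans_lt hy.2).false⟩

lemma map_toDual_dropHigh (n : ℕ) (F : Finset α) :
    (dropHigh n F).map OrderDual.toDual.toEmbedding =
      dropLow n (F.map OrderDual.toDual.toEmbedding) := by
  ext x
  simp [dropHigh, dropLow, filter_map, OrderDual.toDual_lt_toDual]

lemma card_le_card_dropHigh_add (n : ℕ) (F : Finset α) : #F ≤ #(dropHigh n F) + n := by
  simpa [← map_toDual_dropHigh] using
    card_le_card_dropLow_add n (F.map OrderDual.toDual.toEmbedding)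

lemma union_dropHigh_subset (hlt : ∀ a ∈ F, ∀ b ∈ G, a < b) (hn : n ≤ #G) :
    F ∪ dropHigh n G ⊆ dropHigh n (F ∪ G) := by
  intro x hx
  rcases mem_union.1 hx with hx | hx
  · exact mem_filter.2 ⟨mem_union_left _ hx, hn.trans <| card_le_card fun y hy ↦
      mem_filter.2 ⟨mem_union_right _ hy, hlt x hx y hy⟩⟩
  · obtain ⟨hxG, hcard⟩ := mem_filter.1 hx
    exact mem_filter.2 ⟨mem_union_right _ hxG,
      hcard.trans <| card_le_card <| filter_subset_filter _ subset_union_right⟩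

lemma exists_monotone_card_block_le (R : Finset α) {b t : ℕ} (ht : 1 ≤ t) (hR : #R ≤ b * t) :
    ∃ β : α → ℕ, Monotone β ∧ (∀ i, #(block β R i) ≤ t) ∧ #(R.image β) ≤ b := by
  set rank : α → ℕ := fun x ↦ #{y ∈ R | y < x}
  refine ⟨fun x ↦ rank x / t, fun x y hxy ↦ Nat.div_le_div_right <| card_le_card <|
    monotone_filter_right R fun z _ hz ↦ hz.trans_le hxy, fun i ↦ ?_, ?_⟩
  · have hmaps : Set.MapsTo rank (block (fun x ↦ rank x / t) R i) (Ico (i * t) (i * t + t)) := by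
      intro x hx
      obtain ⟨-, rfl⟩ := mem_block.1 hx
      exact mem_coe.2 <| mem_Ico.2 ⟨Nat.div_mul_le_self _ _, Nat.lt_div_mul_add ht⟩
    simpa using card_le_card_of_injOn rank hmaps
      ((strictMonoOn_card_filter_lt R).injOn.mono <| coe_subset.2 block_subset)
  · have hrank : ∀ x ∈ R, rank x < #R := fun x hx ↦
      card_lt_card <| filter_ssubset.2 ⟨x, hx, lt_irrefl x⟩
    have himage : R.image (fun x ↦ rank x / t) ⊆ range b := image_subset_iff.2 fun x hx ↦
      mem_range.2 <| (Nat.div_lt_iff_lt_mul ht).2 <| (hrank x hx).trans_le hR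
    simpa using card_le_card himage

end Trimming

section Formations

/-- The number of entries that a formation asks for in the `i`-th of `s` blocks: `1 + ε` in general,
with `ε` waived for each end of the partition that the block touches. Thus `ε = 1` is the doubled
case and `ε = 0` the plain one. A single block (`s = 1`) is waived twice, so that it may be empty
when `0 < ε`; this matches `D₁ = 0`. -/
def quota (ε s i : ℕ) : ℕ := 1 + ε - (if i = 0 then ε else 0) - (if i + 1 = s then ε else 0)

lemma quota_zero_left (s i : ℕ) : quota 0 s i = 1 := by simp [quota]

lemma quota_le (ε s i : ℕ) : quota ε s i ≤ 1 + ε := by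
  unfold quota
  omega

lemma quota_le_one {ε s i : ℕ} (h : i = 0 ∨ i + 1 = s) : quota ε s i ≤ 1 := by
  unfold quota
  rcases h with h | h <;> simp only [h, if_true] <;> omega

lemma quota_sub_one_sub {ε s i : ℕ} (hi : i < s) : quota ε s (s - 1 - i) = quota ε s i := by
  unfold quota
  split_ifs <;> omega

lemma quota_succ_succ_le (ε s i : ℕ) :
    quota ε (s + 1) (i + 1) ≤ quota ε s i + if i = 0 then ε else 0 := by
  unfold quota
  split_ifs <;> omega

variable {α ι : Type*} {ε r s : ℕ}

/-- The column `F` meets the quota in each of the `s` blocks given by `γ`. -/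
def MeetsQuota (ε s : ℕ) (γ : α → ℕ) (F : Finset α) : Prop :=
  ∀ i < s, quota ε s i ≤ #(block γ F i)

lemma MeetsQuota.mono {γ : α → ℕ} {F G : Finset α} (h : MeetsQuota ε s γ F) (hFG : F ⊆ G) :
    MeetsQuota ε s γ G := fun i hi ↦ (h i hi).trans <| card_le_card <| block_mono hFG

/-- At least `r` of the columns `f j`, `j ∈ V`, meet the quota for a common partition of the rows
into `s` blocks. Blocks are numbered from `0`; with `ε = 1` and `2 ≤ s` this is a doubled
`(r, s)`-formation. -/
def Formation [Preorder α] (ε r s : ℕ) (V : Finset ι) (f : ι → Finset α) : Prop :=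
  ∃ T ⊆ V, r ≤ #T ∧ ∃ γ : α → ℕ, Monotone γ ∧ (∀ x, γ x < s) ∧ ∀ j ∈ T, MeetsQuota ε s γ (f j)

section Preorder

variable [Preorder α] {V W : Finset ι} {f g : ι → Finset α}

lemma Formation.mono (h : Formation ε r s V f) (hVW : V ⊆ W) (hfg : ∀ j ∈ V, f j ⊆ g j) :
    Formation ε r s W g := by
  obtain ⟨T, hT, hr, γ, hγ, hγs, hquota⟩ := h
  exact ⟨T, hT.trans hVW, hr, γ, hγ, hγs, fun j hj ↦ (hquota j hj).mono (hfg j (hT hj))⟩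

omit [Preorder α] in
lemma meetsQuota_map_toDual {γ : αᵒᵈ → ℕ} (hγ : ∀ x, γ x < s) (F : Finset α) :
    MeetsQuota ε s γ (F.map OrderDual.toDual.toEmbedding) ↔
      MeetsQuota ε s (fun x ↦ s - 1 - γ (OrderDual.toDual x)) F := by
  have hcard : ∀ i < s, #(block γ (F.map OrderDual.toDual.toEmbedding) (s - 1 - i)) =
      #(block (fun x ↦ s - 1 - γ (OrderDual.toDual x)) F i) := by
    intro i hi
    rw [block, filter_map, card_map, block]
    congr 1
    refine filter_congr fun x _ ↦ ?_
    have := hγ (OrderDual.toDual x)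
    simp only [Function.comp_apply, Equiv.coe_toEmbedding]
    omega
  refine ⟨fun h i hi ↦ ?_, fun h i hi ↦ ?_⟩
  · rw [← hcard i hi, ← quota_sub_one_sub hi]
    exact h _ (by omega)
  · have := h (s - 1 - i) (by omega)
    rwa [← hcard _ (by omega), quota_sub_one_sub hi, show s - 1 - (s - 1 - i) = i by omega] at this

lemma formation_map_toDual :
    Formation ε r s V (fun j ↦ (f j).map OrderDual.toDual.toEmbedding) ↔ Formation ε r s V f := by
  constructor
  · rintro ⟨T, hT, hr, γ, hγ, hγs, hquota⟩
    refine ⟨T, hT, hr, fun x ↦ s - 1 - γ (OrderDual.toDual x),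
      fun x y hxy ↦ Nat.sub_le_sub_left (hγ (OrderDual.toDual_le_toDual.2 hxy)) _,
      fun x ↦ ?_, fun j hj ↦ (meetsQuota_map_toDual hγs _).1 (hquota j hj)⟩
    have := hγs (OrderDual.toDual x)
    dsimp only
    omega
  · rintro ⟨T, hT, hr, γ, hγ, hγs, hquota⟩
    have hrev : ∀ x, s - 1 - γ x < s := fun x ↦ by have := hγs x; omega
    refine ⟨T, hT, hr, fun x ↦ s - 1 - γ (OrderDual.ofDual x),
      fun x y hxy ↦ Nat.sub_le_sub_left (hγ (OrderDual.ofDual_le_ofDual.2 hxy)) _,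
      fun x ↦ hrev _, fun j hj ↦ (meetsQuota_map_toDual (fun x ↦ hrev _) _).2 ?_⟩
    convert hquota j hj using 2 with x
    have := hγs x
    simp only [OrderDual.ofDual_toDual]
    omega

end Preorder

section LinearOrder

variable [LinearOrder α] {V : Finset ι}

/-- If `dropLow ε B` meets the quota in `s + 1` blocks, then the dropped entries lie in the first
block, where they supply the `ε` entries needed once a new block is placed in front. -/
lemma MeetsQuota.prepend {γ : α → ℕ} (hγ : Monotone γ) (hγs : ∀ x, γ x < s + 1) {Q : Set α}
    [DecidablePred (· ∈ Q)] {A B : Finset α} (hA : A.Nonempty) (hAQ : ∀ a ∈ A, a ∈ Q)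
    (hBQ : ∀ b ∈ B, b ∉ Q) (hB : ε ≤ #B) (h : MeetsQuota ε (s + 1) γ (dropLow ε B)) :
    MeetsQuota ε (s + 2) (fun x ↦ if x ∈ Q then 0 else γ x + 1) (A ∪ B) := by
  rintro (_ | i) hi
  · obtain ⟨a, ha⟩ := hA
    refine (quota_le_one (.inl rfl)).trans <| card_pos.2 ⟨a, ?_⟩
    simp [ha, hAQ a ha]
  have hblock : block γ B i ⊆ block (fun x ↦ if x ∈ Q then 0 else γ x + 1) (A ∪ B) (i + 1) := by
    intro x hx
    rw [mem_block] at hx ⊢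
    simp [hx.1, hx.2, hBQ x hx.1]
  have hquota := h i (by omega)
  refine (quota_succ_succ_le ε (s + 1) i).trans <| le_trans ?_ (card_le_card hblock)
  split_ifs with hi0
  · subst hi0
    have hdropped : B \ dropLow ε B ⊆ block γ B 0 := by
      intro a ha
      refine mem_block.2 ⟨(mem_sdiff.1 ha).1, ?_⟩
      rcases s with _ | s
      · exact Nat.lt_one_iff.1 (hγs a)
      · have hpos : 0 < quota ε (s + 2) 0 := by simp [quota]
        obtain ⟨b, hb⟩ := card_pos.1 (hpos.trans_le hquota)
        have := hγ (lt_of_mem_sdiff_dropLow ha (block_subset hb)).le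
        have := (mem_block.1 hb).2
        omega
    have hdisj : Disjoint (block γ (dropLow ε B) 0) (B \ dropLow ε B) :=
      disjoint_sdiff.mono_left block_subset
    calc quota ε (s + 1) 0 + ε
        ≤ #(block γ (dropLow ε B) 0) + #(B \ dropLow ε B) :=
          Nat.add_le_add hquota (le_card_sdiff_dropLow hB)
      _ = #(block γ (dropLow ε B) 0 ∪ (B \ dropLow ε B)) := (card_union_of_disjoint hdisj).symm
      _ ≤ #(block γ B 0) :=
          card_le_card <| union_subset (block_mono dropLow_subset) hdropped
  · exact hquota.trans <| card_le_card <| block_mono dropLow_subset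

variable {A B : ι → Finset α}

lemma Formation.prepend {Q : Set α} (hQ : IsLowerSet Q) (hA : ∀ j ∈ V, (A j).Nonempty)
    (hAQ : ∀ j ∈ V, ∀ a ∈ A j, a ∈ Q) (hBQ : ∀ j ∈ V, ∀ b ∈ B j, b ∉ Q)
    (hB : ∀ j ∈ V, ε ≤ #(B j)) (h : Formation ε r (s + 1) V fun j ↦ dropLow ε (B j)) :
    Formation ε r (s + 2) V fun j ↦ A j ∪ B j := by
  classical
  obtain ⟨T, hT, hr, γ, hγ, hγs, hquota⟩ := h
  refine ⟨T, hT, hr, fun x ↦ if x ∈ Q then 0 else γ x + 1, fun x y hxy ↦ ?_, fun x ↦ ?_,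
    fun j hj ↦ (hquota j hj).prepend hγ hγs (hA j (hT hj)) (hAQ j (hT hj)) (hBQ j (hT hj))
      (hB j (hT hj))⟩
  · by_cases hx : x ∈ Q
    · simp [hx]
    · have hy : y ∉ Q := fun hy ↦ hx (hQ hxy hy)
      simpa [hx, hy] using hγ hxy
  · have := hγs x
    dsimp only
    split_ifs <;> omega

lemma Formation.append {Q : Set α} (hQ : IsUpperSet Q) (hA : ∀ j ∈ V, (A j).Nonempty)
    (hAQ : ∀ j ∈ V, ∀ a ∈ A j, a ∈ Q) (hBQ : ∀ j ∈ V, ∀ b ∈ B j, b ∉ Q)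
    (hB : ∀ j ∈ V, ε ≤ #(B j)) (h : Formation ε r (s + 1) V fun j ↦ dropHigh ε (B j)) :
    Formation ε r (s + 2) V fun j ↦ A j ∪ B j := by
  rw [← formation_map_toDual] at h ⊢
  simp only [map_union, map_toDual_dropHigh] at h ⊢
  exact h.prepend (Q := OrderDual.ofDual ⁻¹' Q) hQ.toDual (fun j hj ↦ (hA j hj).map)
    (fun j hj ↦ by simpa using hAQ j hj) (fun j hj ↦ by simpa using hBQ j hj)
    (fun j hj ↦ by simpa using hB j hj)

end LinearOrder

section Contraction

variable [Preorder α] {β : α → ℕ} {V : Finset ι} {f : ι → Finset α}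

lemma Formation.of_image (hβ : Monotone β) (h : Formation ε r s V fun j ↦ (f j).image β) :
    Formation ε r s V f := by
  obtain ⟨T, hT, hr, γ, hγ, hγs, hquota⟩ := h
  refine ⟨T, hT, hr, γ ∘ β, hγ.comp hβ, fun x ↦ hγs _, fun j hj i hi ↦ (hquota j hj i hi).trans ?_⟩
  rw [block, filter_image]
  exact card_image_le

/-- The blocks met by the column `F` in more than `ε` entries, together with the first and the last
block that `F` meets. -/
def heavyBlocks (ε : ℕ) (β : α → ℕ) (F : Finset α) : Finset ℕ :=
  {i ∈ F.image β | (∃ x ∈ F, β x < i) → (∃ x ∈ F, i < β x) → 1 + ε ≤ #(block β F i)}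

omit [Preorder α] in
lemma MeetsQuota.of_heavyBlocks {γ : ℕ → ℕ} (hγ : Monotone γ) {F : Finset α}
    (h : MeetsQuota 0 s γ (heavyBlocks ε β F)) : MeetsQuota ε s (γ ∘ β) F := by
  have hmeet : ∀ i < s, ∃ x ∈ F, β x ∈ heavyBlocks ε β F ∧ γ (β x) = i := by
    intro i hi
    obtain ⟨c, hc⟩ := card_pos.1 <| Nat.one_pos.trans_le <| quota_zero_left s i ▸ h i hi
    obtain ⟨hcH, hci⟩ := mem_block.1 hc
    obtain ⟨x, hx, rfl⟩ := mem_image.1 (mem_filter.1 hcH).1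
    exact ⟨x, hx, hcH, hci⟩
  intro i hi
  obtain ⟨x, hxF, hxH, rfl⟩ := hmeet i hi
  by_cases hend : γ (β x) = 0 ∨ γ (β x) + 1 = s
  · exact (quota_le_one hend).trans <| card_pos.2 ⟨x, mem_block.2 ⟨hxF, rfl⟩⟩
  · obtain ⟨x₀, hx₀, -, hγx₀⟩ := hmeet 0 (by omega)
    obtain ⟨x₁, hx₁, -, hγx₁⟩ := hmeet (s - 1) (by omega)
    have hbefore : β x₀ < β x := hγ.reflect_lt (by omega)
    have hafter : β x < β x₁ := hγ.reflect_lt (by omega)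
    calc quota ε s (γ (β x)) ≤ 1 + ε := quota_le _ _ _
      _ ≤ #(block β F (β x)) := (mem_filter.1 hxH).2 ⟨x₀, hx₀, hbefore⟩ ⟨x₁, hx₁, hafter⟩
      _ ≤ #(block (γ ∘ β) F (γ (β x))) := card_le_card fun y hy ↦
          mem_block.2 ⟨block_subset hy, congrArg γ (mem_block.1 hy).2⟩

lemma Formation.of_heavyBlocks (hβ : Monotone β)
    (h : Formation 0 r s V fun j ↦ heavyBlocks ε β (f j)) : Formation ε r s V f := by
  obtain ⟨T, hT, hr, γ, hγ, hγs, hquota⟩ := h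
  exact ⟨T, hT, hr, γ ∘ β, hγ.comp hβ, fun x ↦ hγs _, fun j hj ↦ (hquota j hj).of_heavyBlocks hγ⟩

end Contraction

end Formations

section Classes

variable {α : Type*}

/-- All entries of the column `F` lie in block `i`. -/
def LocalAt (β : α → ℕ) (F : Finset α) (i : ℕ) : Prop := ∀ x ∈ F, β x = i

/-- The column `F` has at least `n` entries in block `i` and continues after that block. -/
def TopHeavyAt (n : ℕ) (β : α → ℕ) (F : Finset α) (i : ℕ) : Prop :=
  n ≤ #(block β F i) ∧ ∃ x ∈ F, i < β x

/-- The column `F` has at least `n` entries in block `i` and starts before that block. -/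
def BottomHeavyAt (n : ℕ) (β : α → ℕ) (F : Finset α) (i : ℕ) : Prop :=
  n ≤ #(block β F i) ∧ ∃ x ∈ F, β x < i

/-- The column `F` has at least `n` entries in block `i`, starts before and continues after it. -/
def MediumHeavyAt (n : ℕ) (β : α → ℕ) (F : Finset α) (i : ℕ) : Prop :=
  n ≤ #(block β F i) ∧ (∃ x ∈ F, β x < i) ∧ ∃ x ∈ F, i < β x

/-- The numerical condition under which a column with `k` entries falls into one of the classes of
the block decomposition: it has `k₁ + ε` entries in an end block, `k₂ + 2ε` entries in an inner
block, `k₃` heavy blocks or `k₄` blocks altogether. -/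
structure Admissible (ε k k₁ k₂ k₃ k₄ : ℕ) : Prop where
  one_le_end : 1 ≤ k₁
  one_le_inner : 1 ≤ k₂ + ε
  three_le_heavy : 3 ≤ k₃
  heavy_le_total : k₃ ≤ k₄
  lt_card : 2 * (k₁ + ε - 1) + (k₃ - 3) * (k₂ + 2 * ε - 1) + ε * (k₄ - k₃) + 1 ≤ k

/-- Trading a light block for a heavy one does not decrease the count, as `ε ≤ q`. -/
lemma sub_mul_add_sub_mul_le {ε q h n k₃ k₄ : ℕ} (hq : ε ≤ q) (hh : 2 ≤ h) (hk₃ : h < k₃)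
    (hn : n < k₄) (hk : k₃ ≤ k₄) :
    (n - h) * ε + (h - 2) * q ≤ (k₃ - 3) * q + ε * (k₄ - k₃) := by
  have hlight : n - h ≤ (k₄ - k₃) + (k₃ - 1 - h) := by omega
  calc (n - h) * ε + (h - 2) * q
      ≤ ((k₄ - k₃) + (k₃ - 1 - h)) * ε + (h - 2) * q := by gcongr
    _ = ε * (k₄ - k₃) + (k₃ - 1 - h) * ε + (h - 2) * q := by ring
    _ ≤ ε * (k₄ - k₃) + (k₃ - 1 - h) * q + (h - 2) * q := by gcongr
    _ = ((k₃ - 1 - h) + (h - 2)) * q + ε * (k₄ - k₃) := by ring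
    _ = (k₃ - 3) * q + ε * (k₄ - k₃) := by
      rw [show k₃ - 1 - h + (h - 2) = k₃ - 3 by omega]

variable {ε k k₁ k₂ k₃ k₄ : ℕ} {β : α → ℕ} {F : Finset α}

lemma exists_end_blocks (hF : F.Nonempty) (hlocal : ∀ i ∈ F.image β, ¬ LocalAt β F i) :
    ∃ a ∈ F.image β, ∃ z ∈ F.image β, a < z ∧ ∀ x ∈ F, a ≤ β x ∧ β x ≤ z := by
  have hne := hF.image β
  have hbounds : ∀ x ∈ F, (F.image β).min' hne ≤ β x ∧ β x ≤ (F.image β).max' hne := fun x hx ↦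
    ⟨min'_le _ _ (mem_image_of_mem β hx), le_max' _ _ (mem_image_of_mem β hx)⟩
  refine ⟨_, min'_mem _ hne, _, max'_mem _ hne, lt_of_not_ge fun hle ↦ ?_, hbounds⟩
  exact hlocal _ (min'_mem _ hne) fun x hx ↦
    ((hbounds x hx).2.trans hle).antisymm (hbounds x hx).1

lemma card_le_of_no_heavy_block {p q a z : ℕ} (ha : a ∈ F.image β) (hz : z ∈ F.image β)
    (haz : a < z) (hends : ∀ x ∈ F, a ≤ β x ∧ β x ≤ z)
    (htop : ∀ i ∈ F.image β, (∃ x ∈ F, i < β x) → #(block β F i) ≤ p)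
    (hbottom : ∀ i ∈ F.image β, (∃ x ∈ F, β x < i) → #(block β F i) ≤ p)
    (hmedium : ∀ i ∈ F.image β, (∃ x ∈ F, β x < i) → (∃ x ∈ F, i < β x) → #(block β F i) ≤ q) :
    2 ≤ #(heavyBlocks ε β F) ∧
      #F ≤ (#(F.image β) - #(heavyBlocks ε β F)) * ε + (#(heavyBlocks ε β F) - 2) * q + 2 * p := by
  set I := F.image β
  set H := heavyBlocks ε β F
  have hHI : H ⊆ I := filter_subset _ _
  obtain ⟨x, hx, hxa⟩ := mem_image.1 ha
  obtain ⟨y, hy, hyz⟩ := mem_image.1 hz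
  have hendsH : {a, z} ⊆ H := by
    simp only [insert_subset_iff, singleton_subset_iff]
    exact ⟨mem_filter.2 ⟨ha, fun ⟨w, hw, hwa⟩ ↦ by have := hends w hw; omega⟩,
      mem_filter.2 ⟨hz, fun _ ⟨w, hw, hzw⟩ ↦ by have := hends w hw; omega⟩⟩
  have hpair : #({a, z} : Finset ℕ) = 2 := card_pair haz.ne
  have hlight : ∑ i ∈ I \ H, #(block β F i) ≤ (#I - #H) * ε := by
    rw [← card_sdiff_of_subset hHI]
    refine sum_le_card_nsmul _ _ _ fun i hi ↦ ?_
    obtain ⟨hiI, hiH⟩ := mem_sdiff.1 hi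
    have : ¬ 1 + ε ≤ #(block β F i) := fun h ↦ hiH <| mem_filter.2 ⟨hiI, fun _ _ ↦ h⟩
    omega
  have hinner : ∑ i ∈ H \ {a, z}, #(block β F i) ≤ (#H - 2) * q := by
    rw [← hpair, ← card_sdiff_of_subset hendsH]
    refine sum_le_card_nsmul _ _ _ fun i hi ↦ ?_
    obtain ⟨hiH, hiaz⟩ := mem_sdiff.1 hi
    obtain ⟨w, hw, rfl⟩ := mem_image.1 (hHI hiH)
    simp only [mem_insert, mem_singleton, not_or] at hiaz
    have := hends w hw
    exact hmedium _ (hHI hiH) ⟨x, hx, by omega⟩ ⟨y, hy, by omega⟩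
  have hend : ∑ i ∈ {a, z}, #(block β F i) ≤ 2 * p := by
    rw [sum_pair haz.ne, two_mul]
    exact add_le_add (htop a ha ⟨y, hy, by omega⟩) (hbottom z hz ⟨x, hx, by omega⟩)
  refine ⟨hpair ▸ card_le_card hendsH, ?_⟩
  rw [card_eq_sum_card_block β F, ← sum_sdiff hHI, ← sum_sdiff hendsH]
  omega

lemma Admissible.exists_class (hA : Admissible ε k k₁ k₂ k₃ k₄) (hF : k ≤ #F) :
    (∃ i ∈ F.image β, LocalAt β F i ∨ TopHeavyAt (k₁ + ε) β F i ∨ BottomHeavyAt (k₁ + ε) β F i ∨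
      MediumHeavyAt (k₂ + 2 * ε) β F i) ∨
    k₃ ≤ #(heavyBlocks ε β F) ∨ k₄ ≤ #(F.image β) := by
  obtain ⟨-, hk₂, -, hk₃₄, hk⟩ := hA
  by_contra! ⟨hclass, hheavy, htotal⟩
  have hne : F.Nonempty := card_pos.1 (by omega)
  obtain ⟨a, ha, z, hz, haz, hends⟩ := exists_end_blocks hne fun i hi ↦ (hclass i hi).1
  obtain ⟨htwo, hcard⟩ := card_le_of_no_heavy_block (ε := ε) (p := k₁ + ε - 1)
    (q := k₂ + 2 * ε - 1) ha hz haz hends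
    (fun i hi hafter ↦ Nat.le_sub_one_of_lt <| lt_of_not_ge fun h ↦
      (hclass i hi).2.1 ⟨h, hafter⟩)
    (fun i hi hbefore ↦ Nat.le_sub_one_of_lt <| lt_of_not_ge fun h ↦
      (hclass i hi).2.2.1 ⟨h, hbefore⟩)
    (fun i hi hbefore hafter ↦ Nat.le_sub_one_of_lt <| lt_of_not_ge fun h ↦
      (hclass i hi).2.2.2 ⟨h, hbefore, hafter⟩)
  have := sub_mul_add_sub_mul_le (ε := ε) (q := k₂ + 2 * ε - 1) (by omega) htwo hheavy htotal hk₃₄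
  omega

end Classes

section Bounds

/-- `Δ ≤ N` for formations of the kind `ε`: a matrix with `m` rows, at least `k` entries in every
column and no `(r, s)`-formation has at most `N` columns. The rows are any `m` elements of a linear
order, so that the bound applies to the rows of a block and to contracted matrices alike. -/
def ColumnBound (ε r s k m N : ℕ) : Prop :=
  ∀ (α ι : Type) [LinearOrder α] (R : Finset α) (V : Finset ι) (f : ι → Finset α), #R = m →
    (∀ j ∈ V, f j ⊆ R) → (∀ j ∈ V, k ≤ #(f j)) → ¬ Formation ε r s V f → #V ≤ N

/-- At most `ψ` columns per row for matrices with at least one and at most `t` rows. -/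
def RateBound (ε r s k t ψ : ℕ) : Prop :=
  ∀ m, 1 ≤ m → m ≤ t → ColumnBound ε r s k m (ψ * m)

variable {ε r s k k' m N N' t t' ψ ψ' : ℕ}

lemma ColumnBound.mono (h : ColumnBound ε r s k m N) (hk : k ≤ k') (hN : N ≤ N') :
    ColumnBound ε r s k' m N' := fun α ι _ R V f hR hf hkf hfree ↦
  (h α ι R V f hR hf (fun j hj ↦ hk.trans (hkf j hj)) hfree).trans hN

lemma ColumnBound.of_lt (h : m < k) : ColumnBound ε r s k m 0 := by
  intro α ι _ R V f hR hf hkf _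
  refine (card_eq_zero.2 <| eq_empty_of_forall_notMem fun j hj ↦ ?_).le
  have := card_le_card (hf j hj)
  have := hkf j hj
  omega

lemma RateBound.mono (h : RateBound ε r s k t ψ) (hk : k ≤ k') (ht : t' ≤ t) (hψ : ψ ≤ ψ') :
    RateBound ε r s k' t' ψ' := fun m hm hmt ↦
  (h m hm (hmt.trans ht)).mono hk (Nat.mul_le_mul_right m hψ)

lemma RateBound.of_lt (h : t < k) : RateBound ε r s k t 0 := fun m _ hm ↦
  (ColumnBound.of_lt (hm.trans_lt h)).mono le_rfl (by simp)

variable {α ι : Type} [LinearOrder α] {R : Finset α} {V : Finset ι} {f : ι → Finset α}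

lemma RateBound.card_le (h : RateBound ε r s k t ψ) (hRt : #R ≤ t) (hR : V.Nonempty → R.Nonempty)
    (hf : ∀ j ∈ V, f j ⊆ R) (hk : ∀ j ∈ V, k ≤ #(f j)) (hfree : ¬ Formation ε r s V f) :
    #V ≤ ψ * #R := by
  rcases V.eq_empty_or_nonempty with rfl | hV
  · simp
  · exact h #R (card_pos.2 (hR hV)) hRt α ι R V f rfl hf hk hfree

variable {β : α → ℕ} {i k₁ k₂ k₃ k₄ ψ₁ ψ₂ ψ₃ ψ₄ : ℕ}

lemma RateBound.card_local_le (h : RateBound ε r s k t ψ) (hk₀ : 1 ≤ k)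
    (hRt : #(block β R i) ≤ t) (hf : ∀ j ∈ V, f j ⊆ R) (hk : ∀ j ∈ V, k ≤ #(f j))
    (hlocal : ∀ j ∈ V, LocalAt β (f j) i) (hfree : ¬ Formation ε r s V f) :
    #V ≤ ψ * #(block β R i) := by
  have hsub : ∀ j ∈ V, f j ⊆ block β R i := fun j hj x hx ↦
    mem_block.2 ⟨hf j hj hx, hlocal j hj x hx⟩
  exact h.card_le hRt
    (fun ⟨j, hj⟩ ↦ (card_pos.1 (hk₀.trans (hk j hj))).mono (hsub j hj)) hsub hk hfree

lemma isUpperSet_lt_block (hβ : Monotone β) (i : ℕ) : IsUpperSet {x | i < β x} :=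
  fun _ _ hxy hx ↦ lt_of_lt_of_le hx (hβ hxy)

lemma isLowerSet_block_lt (hβ : Monotone β) (i : ℕ) : IsLowerSet {x | β x < i} :=
  fun _ _ hyx hx ↦ lt_of_le_of_lt (hβ hyx) hx

lemma RateBound.card_topHeavy_le (h : RateBound ε r (s + 1) k₁ t ψ₁) (hk₁ : 1 ≤ k₁)
    (hβ : Monotone β) (hRt : #(block β R i) ≤ t) (hf : ∀ j ∈ V, f j ⊆ R)
    (hheavy : ∀ j ∈ V, TopHeavyAt (k₁ + ε) β (f j) i) (hfree : ¬ Formation ε r (s + 2) V f) :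
    #V ≤ ψ₁ * #(block β R i) := by
  have hcard : ∀ j ∈ V, k₁ ≤ #(dropHigh ε (block β (f j) i)) := fun j hj ↦ by
    have := card_le_card_dropHigh_add ε (block β (f j) i)
    have := (hheavy j hj).1
    omega
  have hsub : ∀ j ∈ V, dropHigh ε (block β (f j) i) ⊆ block β R i := fun j hj ↦
    dropHigh_subset.trans <| block_mono (hf j hj)
  refine h.card_le hRt (fun ⟨j, hj⟩ ↦ (card_pos.1 (hk₁.trans (hcard j hj))).mono (hsub j hj))
    hsub hcard fun hform ↦ hfree ?_
  refine (hform.append (A := fun j ↦ {x ∈ f j | i < β x}) (isUpperSet_lt_block hβ i)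
    (fun j hj ↦ filter_nonempty_iff.2 (hheavy j hj).2) (fun j _ a ha ↦ (mem_filter.1 ha).2)
    (fun j _ b hb ↦ (mem_block.1 hb).2.not_gt) fun j hj ↦ ?_).mono subset_rfl
    fun j _ ↦ union_subset (filter_subset _ _) block_subset
  exact (Nat.le_add_left _ _).trans (hheavy j hj).1

lemma RateBound.card_bottomHeavy_le (h : RateBound ε r (s + 1) k₁ t ψ₁) (hk₁ : 1 ≤ k₁)
    (hβ : Monotone β) (hRt : #(block β R i) ≤ t) (hf : ∀ j ∈ V, f j ⊆ R)
    (hheavy : ∀ j ∈ V, BottomHeavyAt (k₁ + ε) β (f j) i) (hfree : ¬ Formation ε r (s + 2) V f) :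
    #V ≤ ψ₁ * #(block β R i) := by
  have hcard : ∀ j ∈ V, k₁ ≤ #(dropLow ε (block β (f j) i)) := fun j hj ↦ by
    have := card_le_card_dropLow_add ε (block β (f j) i)
    have := (hheavy j hj).1
    omega
  have hsub : ∀ j ∈ V, dropLow ε (block β (f j) i) ⊆ block β R i := fun j hj ↦
    dropLow_subset.trans <| block_mono (hf j hj)
  refine h.card_le hRt (fun ⟨j, hj⟩ ↦ (card_pos.1 (hk₁.trans (hcard j hj))).mono (hsub j hj))
    hsub hcard fun hform ↦ hfree ?_
  refine (hform.prepend (A := fun j ↦ {x ∈ f j | β x < i}) (isLowerSet_block_lt hβ i)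
    (fun j hj ↦ filter_nonempty_iff.2 (hheavy j hj).2) (fun j _ a ha ↦ (mem_filter.1 ha).2)
    (fun j _ b hb ↦ (mem_block.1 hb).2.not_lt) fun j hj ↦ ?_).mono subset_rfl
    fun j _ ↦ union_subset (filter_subset _ _) block_subset
  exact (Nat.le_add_left _ _).trans (hheavy j hj).1

lemma Formation.of_mediumHeavy (hβ : Monotone β)
    (hheavy : ∀ j ∈ V, MediumHeavyAt (2 * ε) β (f j) i)
    (h : Formation ε r (s + 1) V fun j ↦ dropLow ε (dropHigh ε (block β (f j) i))) :
    Formation ε r (s + 3) V f := by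
  have hε : ∀ j ∈ V, ε ≤ #(block β (f j) i) ∧ ε ≤ #(dropHigh ε (block β (f j) i)) := fun j hj ↦ by
    have := card_le_card_dropHigh_add ε (block β (f j) i)
    have := (hheavy j hj).1
    omega
  have hbefore : Formation ε r (s + 2) V fun j ↦
      {x ∈ f j | β x < i} ∪ dropHigh ε (block β (f j) i) :=
    h.prepend (isLowerSet_block_lt hβ i) (fun j hj ↦ filter_nonempty_iff.2 (hheavy j hj).2.1)
      (fun j _ a ha ↦ (mem_filter.1 ha).2)
      (fun j _ b hb ↦ (mem_block.1 (dropHigh_subset hb)).2.not_lt) fun j hj ↦ (hε j hj).2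
  have hmerge : ∀ j ∈ V, {x ∈ f j | β x < i} ∪ dropHigh ε (block β (f j) i) ⊆
      dropHigh ε ({x ∈ f j | β x < i} ∪ block β (f j) i) := fun j hj ↦
    union_dropHigh_subset (fun a ha b hb ↦ hβ.reflect_lt <| by
      rw [(mem_block.1 hb).2]; exact (mem_filter.1 ha).2) (hε j hj).1
  refine ((hbefore.mono subset_rfl hmerge).append (A := fun j ↦ {x ∈ f j | i < β x})
    (isUpperSet_lt_block hβ i) (fun j hj ↦ filter_nonempty_iff.2 (hheavy j hj).2.2)
    (fun j _ a ha ↦ (mem_filter.1 ha).2) (fun j _ b hb ↦ ?_) fun j hj ↦ ?_).mono subset_rfl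
    fun j _ ↦ union_subset (filter_subset _ _) (union_subset (filter_subset _ _) block_subset)
  · rcases mem_union.1 hb with hb | hb
    · exact (mem_filter.1 hb).2.not_gt
    · exact (mem_block.1 hb).2.not_gt
  · exact (hε j hj).1.trans (card_le_card subset_union_right)

lemma RateBound.card_mediumHeavy_le (h : RateBound ε r (s + 1) k₂ t ψ₂) (hk₂ : 1 ≤ k₂ + ε)
    (hβ : Monotone β) (hRt : #(block β R i) ≤ t) (hf : ∀ j ∈ V, f j ⊆ R)
    (hheavy : ∀ j ∈ V, MediumHeavyAt (k₂ + 2 * ε) β (f j) i)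
    (hfree : ¬ Formation ε r (s + 3) V f) :
    #V ≤ ψ₂ * #(block β R i) := by
  refine h.card_le hRt (fun ⟨j, hj⟩ ↦ ?_)
    (fun j hj ↦ dropLow_subset.trans <| dropHigh_subset.trans <| block_mono (hf j hj))
    (fun j hj ↦ ?_) fun hform ↦ hfree <| hform.of_mediumHeavy hβ fun j hj ↦
      ⟨(Nat.le_add_left _ _).trans (hheavy j hj).1, (hheavy j hj).2⟩
  · refine Nonempty.mono (block_mono (hf j hj)) <| card_pos.1 ?_
    have := (hheavy j hj).1
    omega
  · have := card_le_card_dropHigh_add ε (block β (f j) i)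
    have := card_le_card_dropLow_add ε (dropHigh ε (block β (f j) i))
    have := (hheavy j hj).1
    omega

lemma RateBound.card_heavyBlocks_le (h : RateBound 0 r s k₃ t ψ₃) (hk₃ : 1 ≤ k₃)
    (hβ : Monotone β) (hRt : #(R.image β) ≤ t) (hf : ∀ j ∈ V, f j ⊆ R)
    (hheavy : ∀ j ∈ V, k₃ ≤ #(heavyBlocks ε β (f j))) (hfree : ¬ Formation ε r s V f) :
    #V ≤ ψ₃ * t := by
  have hsub : ∀ j ∈ V, heavyBlocks ε β (f j) ⊆ R.image β := fun j hj ↦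
    (filter_subset _ _).trans <| image_subset_image (hf j hj)
  exact (h.card_le hRt (fun ⟨j, hj⟩ ↦ (card_pos.1 (hk₃.trans (hheavy j hj))).mono (hsub j hj))
    hsub hheavy fun hform ↦ hfree (hform.of_heavyBlocks hβ)).trans (Nat.mul_le_mul_left _ hRt)

lemma RateBound.card_image_le (h : RateBound ε r s k₄ t ψ₄) (hk₄ : 1 ≤ k₄)
    (hβ : Monotone β) (hRt : #(R.image β) ≤ t) (hf : ∀ j ∈ V, f j ⊆ R)
    (hspread : ∀ j ∈ V, k₄ ≤ #((f j).image β)) (hfree : ¬ Formation ε r s V f) :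
    #V ≤ ψ₄ * t := by
  have hsub : ∀ j ∈ V, (f j).image β ⊆ R.image β := fun j hj ↦ image_subset_image (hf j hj)
  exact (h.card_le hRt (fun ⟨j, hj⟩ ↦ (card_pos.1 (hk₄.trans (hspread j hj))).mono (hsub j hj))
    hsub hspread fun hform ↦ hfree (hform.of_image hβ)).trans (Nat.mul_le_mul_left _ hRt)

open Classical in
lemma card_blockClasses_le (hk : 1 ≤ k) (hk₁ : 1 ≤ k₁) (hk₂ : 1 ≤ k₂ + ε)
    (h : RateBound ε r (s + 3) k t ψ) (h₁ : RateBound ε r (s + 2) k₁ t ψ₁)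
    (h₂ : RateBound ε r (s + 1) k₂ t ψ₂) (hβ : Monotone β) (hRt : #(block β R i) ≤ t)
    (hf : ∀ j ∈ V, f j ⊆ R) (hkf : ∀ j ∈ V, k ≤ #(f j)) (hfree : ¬ Formation ε r (s + 3) V f) :
    #{j ∈ V | LocalAt β (f j) i ∨ TopHeavyAt (k₁ + ε) β (f j) i ∨
      BottomHeavyAt (k₁ + ε) β (f j) i ∨ MediumHeavyAt (k₂ + 2 * ε) β (f j) i} ≤
      (ψ + 2 * ψ₁ + ψ₂) * #(block β R i) := by
  have hfree' : ∀ P : ι → Prop, ¬ Formation ε r (s + 3) {j ∈ V | P j} f := fun P hform ↦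
    hfree <| hform.mono (filter_subset _ _) fun _ _ ↦ subset_rfl
  have hfP : ∀ P : ι → Prop, ∀ j ∈ ({j ∈ V | P j} : Finset ι), f j ⊆ R := fun P j hj ↦
    hf j (mem_filter.1 hj).1
  have hlocal := h.card_local_le hk hRt (hfP _) (fun j hj ↦ hkf j (mem_filter.1 hj).1)
    (fun j hj ↦ (mem_filter.1 hj).2) (hfree' fun j ↦ LocalAt β (f j) i)
  have htop := h₁.card_topHeavy_le hk₁ hβ hRt (hfP _) (fun j hj ↦ (mem_filter.1 hj).2)
    (hfree' fun j ↦ TopHeavyAt (k₁ + ε) β (f j) i)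
  have hbottom := h₁.card_bottomHeavy_le hk₁ hβ hRt (hfP _) (fun j hj ↦ (mem_filter.1 hj).2)
    (hfree' fun j ↦ BottomHeavyAt (k₁ + ε) β (f j) i)
  have hmedium := h₂.card_mediumHeavy_le hk₂ hβ hRt (hfP _) (fun j hj ↦ (mem_filter.1 hj).2)
    (hfree' fun j ↦ MediumHeavyAt (k₂ + 2 * ε) β (f j) i)
  simp only [filter_or]
  refine (card_union_le _ _).trans <| (Nat.add_le_add_left ((card_union_le _ _).trans <|
    Nat.add_le_add_left (card_union_le _ _) _) _).trans ?_
  linarith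

/-- Cut the rows into at most `b` blocks of at most `t` rows,
treat columns that concentrate in some block inside that block, and contract the blocks to single
rows for the other columns. -/
lemma Admissible.columnBound {b : ℕ} (hA : Admissible ε k k₁ k₂ k₃ k₄) (ht : 1 ≤ t)
    (hm : m ≤ b * t) (h : RateBound ε r (s + 3) k t ψ) (h₁ : RateBound ε r (s + 2) k₁ t ψ₁)
    (h₂ : RateBound ε r (s + 1) k₂ t ψ₂) (h₃ : RateBound 0 r (s + 3) k₃ b ψ₃)
    (h₄ : RateBound ε r (s + 3) k₄ b ψ₄) :
    ColumnBound ε r (s + 3) k m ((ψ + 2 * ψ₁ + ψ₂) * m + (ψ₃ + ψ₄) * b) := by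
  classical
  rintro α ι _ R V f rfl hf hk hfree
  obtain ⟨hk₁, hk₂, hk₃, hk₃₄, hk₀⟩ := id hA
  obtain ⟨β, hβ, hblock, himage⟩ := exists_monotone_card_block_le R ht hm
  set concentrated : ℕ → Finset ι := fun i ↦ {j ∈ V | LocalAt β (f j) i ∨
    TopHeavyAt (k₁ + ε) β (f j) i ∨ BottomHeavyAt (k₁ + ε) β (f j) i ∨
    MediumHeavyAt (k₂ + 2 * ε) β (f j) i}
  set heavy : Finset ι := {j ∈ V | k₃ ≤ #(heavyBlocks ε β (f j))}
  set spread : Finset ι := {j ∈ V | k₄ ≤ #((f j).image β)}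
  have hcover : V ⊆ (R.image β).biUnion concentrated ∪ (heavy ∪ spread) := by
    intro j hj
    simp only [mem_union, mem_biUnion, concentrated, heavy, spread, mem_filter]
    rcases hA.exists_class (β := β) (hk j hj) with ⟨i, hi, hclass⟩ | hheavy | hspread
    · exact .inl ⟨i, image_subset_image (hf j hj) hi, hj, hclass⟩
    · exact .inr (.inl ⟨hj, hheavy⟩)
    · exact .inr (.inr ⟨hj, hspread⟩)
  have hfree' : ∀ W ⊆ V, ¬ Formation ε r (s + 3) W f := fun W hW hform ↦
    hfree <| hform.mono hW fun _ _ ↦ subset_rfl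
  have hconcentrated : #((R.image β).biUnion concentrated) ≤ (ψ + 2 * ψ₁ + ψ₂) * #R := by
    rw [card_eq_sum_card_block β R, mul_sum]
    exact card_biUnion_le.trans <| sum_le_sum fun i _ ↦
      card_blockClasses_le (by omega) hk₁ hk₂ h h₁ h₂ hβ (hblock i) hf hk hfree
  have hheavy : #heavy ≤ ψ₃ * b := h₃.card_heavyBlocks_le (by omega) hβ himage
    (fun j hj ↦ hf j (mem_filter.1 hj).1) (fun j hj ↦ (mem_filter.1 hj).2)
    (hfree' heavy (filter_subset _ _))
  have hspread : #spread ≤ ψ₄ * b := h₄.card_image_le (by omega) hβ himage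
    (fun j hj ↦ hf j (mem_filter.1 hj).1) (fun j hj ↦ (mem_filter.1 hj).2)
    (hfree' spread (filter_subset _ _))
  calc #V ≤ #((R.image β).biUnion concentrated) + (#heavy + #spread) :=
        (card_le_card hcover).trans <| (card_union_le _ _).trans <|
          Nat.add_le_add_left (card_union_le _ _) _
    _ ≤ (ψ + 2 * ψ₁ + ψ₂) * #R + (ψ₃ + ψ₄) * b := by
        rw [add_mul ψ₃]
        gcongr

end Bounds

section InverseAckermann

lemma iterCount_eq_iterCount {f : ℕ → ℕ} (hf : ∀ x, 2 ≤ x → f x < x) :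
    ∀ {n n' m : ℕ}, m ≤ n + 1 → m ≤ n' + 1 → iterCount f n m = iterCount f n' m
  | 0, 0, _, _, _ => rfl
  | 0, n' + 1, m, h, _ => by simp [iterCount, show m ≤ 1 by omega]
  | n + 1, 0, m, _, h => by simp [iterCount, show m ≤ 1 by omega]
  | n + 1, n' + 1, m, h, h' => by
    by_cases hm : m ≤ 1
    · simp [iterCount, hm]
    · have := hf m (by omega)
      simp only [iterCount, hm, if_false]
      rw [iterCount_eq_iterCount hf (n := n) (n' := n') (by omega) (by omega)]

lemma alphaHier_eq_zero (d : ℕ) {m : ℕ} (hm : m ≤ 1) : alphaHier (d + 2) m = 0 := by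
  change iterCount (alphaHier (d + 1)) m m = 0
  cases m <;> simp [iterCount, hm]

lemma alphaHier_rec_of_lt {d m : ℕ} (hlt : ∀ x, 2 ≤ x → alphaHier (d + 1) x < x) (hm : 2 ≤ m) :
    alphaHier (d + 2) m = alphaHier (d + 2) (alphaHier (d + 1) m) + 1 := by
  obtain ⟨n, rfl⟩ : ∃ n, m = n + 1 := ⟨m - 1, by omega⟩
  have := hlt (n + 1) hm
  change iterCount (alphaHier (d + 1)) (n + 1) (n + 1) = iterCount (alphaHier (d + 1)) _ _ + 1
  rw [iterCount, if_neg (by omega), add_comm,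
    iterCount_eq_iterCount hlt (n := n) (by omega) (Nat.le_succ _)]

lemma alphaHier_pos_and_lt (d : ℕ) :
    ∀ {m : ℕ}, 2 ≤ m → 0 < alphaHier (d + 1) m ∧ alphaHier (d + 1) m < m := by
  induction d with
  | zero => intro m hm; simp only [alphaHier]; omega
  | succ d ih =>
    intro m hm
    change 0 < alphaHier (d + 2) m ∧ alphaHier (d + 2) m < m
    have hrec : ∀ {x}, 2 ≤ x →
        alphaHier (d + 2) x = alphaHier (d + 2) (alphaHier (d + 1) x) + 1 :=
      alphaHier_rec_of_lt fun x hx ↦ (ih hx).2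
    refine ⟨by rw [hrec hm]; omega, ?_⟩
    induction m using Nat.strong_induction_on with
    | _ m ihm =>
      rw [hrec hm]
      have := ih hm
      by_cases h : 2 ≤ alphaHier (d + 1) m
      · have := ihm _ this.2 h
        omega
      · rw [alphaHier_eq_zero d (by omega)]
        omega

lemma alphaHier_lt (d : ℕ) {m : ℕ} (hm : 2 ≤ m) : alphaHier (d + 1) m < m :=
  (alphaHier_pos_and_lt d hm).2

lemma alphaHier_pos (d : ℕ) {m : ℕ} (hm : 2 ≤ m) : 0 < alphaHier (d + 1) m :=
  (alphaHier_pos_and_lt d hm).1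

lemma alphaHier_rec (d : ℕ) {m : ℕ} (hm : 2 ≤ m) :
    alphaHier (d + 2) m = alphaHier (d + 2) (alphaHier (d + 1) m) + 1 :=
  alphaHier_rec_of_lt (fun _ ↦ alphaHier_lt d) hm

lemma alphaHier_mono (d : ℕ) : Monotone (alphaHier (d + 1)) := by
  induction d with
  | zero => intro a b hab; simp only [alphaHier]; omega
  | succ d ih =>
    intro a b hab
    induction b using Nat.strong_induction_on generalizing a with
    | _ b ihb =>
      by_cases ha : 2 ≤ a
      · rw [alphaHier_rec d ha, alphaHier_rec d (ha.trans hab)]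
        exact Nat.succ_le_succ (ihb _ (alphaHier_lt d (ha.trans hab)) (ih hab))
      · rw [alphaHier_eq_zero d (by omega)]
        omega

lemma alphaHier_succ_le (d m : ℕ) : alphaHier (d + 3) m ≤ alphaHier (d + 2) m := by
  by_cases hm : 2 ≤ m
  · have hpos : 0 < alphaHier (d + 2) m := alphaHier_pos (d + 1) hm
    change alphaHier (d + 1 + 2) m ≤ _
    rw [alphaHier_rec (d + 1) hm]
    by_cases h : 2 ≤ alphaHier (d + 2) m
    · exact alphaHier_lt (d + 2) h
    · rw [alphaHier_eq_zero (d + 1) (Nat.le_of_lt_succ (not_le.1 h))]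
      omega
  · rw [alphaHier_eq_zero (d + 1) (by omega)]
    omega

lemma alphaHier_le_alphaHier_two (d m : ℕ) : alphaHier (d + 2) m ≤ alphaHier 2 m := by
  induction d with
  | zero => rfl
  | succ d ih => exact (alphaHier_succ_le d m).trans ih

lemma alphaHier_two_le_clog (m : ℕ) : alphaHier 2 m ≤ Nat.clog 2 m := by
  induction m using Nat.strong_induction_on with
  | _ m ih =>
    by_cases hm : 2 ≤ m
    · rw [alphaHier_rec 0 hm, Nat.clog_of_two_le one_lt_two hm]
      exact Nat.succ_le_succ (ih _ (alphaHier_lt 0 hm))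
    · rw [alphaHier_eq_zero 0 (by omega)]
      omega

lemma exists_mul_pow_mul_two_le_two_pow (A q : ℕ) : ∃ N, ∀ n, N ≤ n → A * n ^ q * 2 ≤ 2 ^ n := by
  have hlim := tendsto_pow_const_div_const_pow_of_one_lt q (r := (2 : ℝ)) one_lt_two
  obtain ⟨N, hN⟩ := Filter.eventually_atTop.1 <|
    hlim.eventually_lt_const (show (0 : ℝ) < 1 / (2 * A + 1) by positivity)
  refine ⟨N, fun n hn ↦ ?_⟩
  have hlt := hN n hn
  rw [div_lt_div_iff₀ (by positivity) (by positivity)] at hlt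
  have hlt' : n ^ q * (2 * A + 1) < 1 * 2 ^ n := by exact_mod_cast hlt
  linarith [Nat.zero_le (n ^ q)]

lemma exists_mul_alphaHier_two_pow_le (A q : ℕ) :
    ∃ X, 1 ≤ X ∧ ∀ z, X ≤ z → A * alphaHier 2 z ^ q ≤ z := by
  obtain ⟨N, hN⟩ := exists_mul_pow_mul_two_le_two_pow A q
  have hpos : 0 < 2 ^ N := by positivity
  refine ⟨2 ^ (N + 1), Nat.one_le_two_pow, fun z hz ↦ ?_⟩
  have hz₂ : 2 ≤ z := by rw [pow_succ] at hz; omega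
  have hclog : N + 1 ≤ Nat.clog 2 z := by
    simpa [Nat.clog_pow 2 _ one_lt_two] using Nat.clog_mono_right 2 hz
  have hz' : 2 ^ (Nat.clog 2 z - 1) < z := Nat.pow_pred_clog_lt_self one_lt_two (by omega)
  have hsplit : 2 ^ Nat.clog 2 z = 2 ^ (Nat.clog 2 z - 1) * 2 := by
    rw [← pow_succ, Nat.sub_add_cancel (by omega)]
  calc A * alphaHier 2 z ^ q ≤ A * Nat.clog 2 z ^ q := by
        gcongr
        exact alphaHier_two_le_clog z
    _ ≤ z := by
        have := hN (Nat.clog 2 z) (by omega)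
        omega

end InverseAckermann

section AckermannBounds

/-- Columns of `m` rows avoiding formations obey `Δ ≤ C · r · m · α_d(m)^(s-2)`, with a constant
that depends neither on `r` nor on `m`. The bound is stated as a rate, so that it also covers all
smaller numbers of rows; for `s = 1` truncated subtraction makes the exponent `0`. -/
def AckermannBound (ε s k d C : ℕ) : Prop :=
  ∀ r m, RateBound ε r s k m (r * (C * alphaHier d m ^ (s - 2)))

variable {ε r s k k' k₁ k₂ k₃ k₄ d C C' C₁ C₂ m : ℕ}

lemma AckermannBound.mono (h : AckermannBound ε s k d C) (hk : k ≤ k') (hC : C ≤ C') :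
    AckermannBound ε s k' d C' := fun r m ↦
  (h r m).mono hk le_rfl (by gcongr)

lemma AckermannBound.rateBound {a p : ℕ} (h : AckermannBound ε s k d C) (ha : alphaHier d m ≤ a)
    (ha₁ : 1 ≤ a) (hp : s - 2 ≤ p) : RateBound ε r s k m (r * (C * a ^ p)) := by
  refine (h r m).mono le_rfl le_rfl ?_
  gcongr ?_ * (_ * ?_)
  · exact le_rfl
  · exact (Nat.pow_le_pow_left ha _).trans (Nat.pow_le_pow_right ha₁ hp)

lemma AckermannBound.of_columnBound (hk : 2 ≤ k)
    (h : ∀ r m, 2 ≤ m → (∀ t < m, RateBound ε r s k t (r * (C * alphaHier (d + 1) t ^ (s - 2)))) →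
      ColumnBound ε r s k m (r * (C * alphaHier (d + 1) m ^ (s - 2)) * m)) :
    AckermannBound ε s k (d + 1) C := by
  intro r m
  induction m using Nat.strong_induction_on with
  | _ m ih =>
    intro n hn hnm
    rcases hnm.lt_or_eq with hlt | rfl
    · refine ((ih n hlt).mono le_rfl le_rfl ?_) n hn le_rfl
      have := alphaHier_mono d hnm
      gcongr
    · by_cases h₂ : 2 ≤ n
      · exact h r n h₂ ih
      · exact (ColumnBound.of_lt (by omega)).mono le_rfl (Nat.zero_le _)

lemma ackermannBound_one (hk : 1 ≤ k + ε) : AckermannBound ε 1 k d 1 := by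
  rintro r - m hm - α ι _ R V f - - hkf hfree
  have hlt : #V < r := by
    by_contra! hr
    refine hfree ⟨V, subset_rfl, hr, fun _ ↦ 0, monotone_const, fun _ ↦ Nat.one_pos,
      fun j hj i hi ↦ ?_⟩
    obtain rfl : i = 0 := by omega
    have := hkf j hj
    simp only [quota, block, filter_true, if_true, zero_add]
    omega
  simp only [Nat.reduceSubDiff, pow_zero, mul_one]
  exact hlt.le.trans (Nat.le_mul_of_pos_right r hm)

/-- By pigeonhole `r` columns have their first entry in the same row; cut just below that row. -/
lemma ackermannBound_two : AckermannBound ε 2 2 d 1 := by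
  classical
  rintro r - m - - α ι _ R V f rfl hf hkf hfree
  simp only [Nat.sub_self, pow_zero, mul_one]
  by_contra! hlt
  have hfirst : ∀ j ∈ V, ∃ x ∈ f j, ∀ y ∈ f j, x ≤ y := fun j hj ↦
    have hne : (f j).Nonempty := card_pos.1 (two_pos.trans_le (hkf j hj))
    ⟨_, min'_mem _ hne, fun y ↦ min'_le _ y⟩
  obtain ⟨j, hj⟩ := card_pos.1 ((Nat.zero_le _).trans_lt hlt)
  have : Nonempty α := (hfirst j hj).nonempty
  choose! first hmem hmin using hfirst
  have hmaps : ∀ j ∈ V, first j ∈ R := fun j hj ↦ hf j hj (hmem j hj)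
  obtain ⟨q, -, hq⟩ := exists_lt_card_fiber_of_mul_lt_card_of_maps_to hmaps
    ((mul_comm _ _).trans_lt hlt)
  refine hfree ⟨_, filter_subset _ _, hq.le, fun x ↦ if x ≤ q then 0 else 1, fun x y hxy ↦ ?_,
    fun x ↦ by dsimp only; split_ifs <;> omega, fun j hj i hi ↦ ?_⟩
  · dsimp only
    split_ifs with hx hy hy
    exacts [le_rfl, Nat.zero_le _, absurd (hxy.trans hy) hx, le_rfl]
  · obtain ⟨hjV, rfl⟩ := mem_filter.1 hj
    refine (quota_le_one (by omega)).trans (card_pos.2 ?_)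
    obtain rfl | rfl : i = 0 ∨ i = 1 := by omega
    · exact ⟨first j, mem_block.2 ⟨hmem j hjV, if_pos le_rfl⟩⟩
    · obtain ⟨y, hy, hne⟩ := exists_mem_ne (hkf j hjV) (first j)
      exact ⟨y, mem_block.2 ⟨hy, if_neg fun hle ↦ hne (hle.antisymm (hmin j hjV y hy))⟩⟩

lemma pow_succ_add_pow_le (a s : ℕ) : a ^ (s + 1) + (a + 1) ^ s ≤ (a + 1) ^ (s + 1) := by
  have : a ^ s * a ≤ (a + 1) ^ s * a := by gcongr; omega
  rw [pow_succ, pow_succ]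
  linarith

/-- Halving the rows: with only two blocks no column has three heavy blocks. -/
lemma Admissible.ackermannBound_two (hA : Admissible ε k k₁ k₂ 3 3) (hk : 2 ≤ k)
    (h₁ : AckermannBound ε (s + 2) k₁ 2 C₁) (h₂ : AckermannBound ε (s + 1) k₂ 2 C₂) :
    AckermannBound ε (s + 3) k 2 (2 * C₁ + C₂) := by
  refine .of_columnBound (d := 1) hk fun r m hm ih ↦ ?_
  change ColumnBound ε r (s + 3) k m (r * ((2 * C₁ + C₂) * alphaHier 2 m ^ (s + 1)) * m)
  set t := (m + 1) / 2
  set C := 2 * C₁ + C₂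
  have hrec : alphaHier 2 m = alphaHier 2 t + 1 := alphaHier_rec 0 hm
  set a := alphaHier 2 t
  refine (hA.columnBound (b := 2) (by omega) (by omega) (ih t (by omega))
    (h₁.rateBound (Nat.le_succ a) (Nat.le_add_left 1 a) le_rfl)
    (h₂.rateBound (Nat.le_succ a) (Nat.le_add_left 1 a) (Nat.sub_le_sub_right (Nat.le_succ _) 1))
    (.of_lt (by omega)) (.of_lt (by omega))).mono le_rfl ?_
  rw [hrec]
  calc (r * (C * a ^ (s + 1)) + 2 * (r * (C₁ * (a + 1) ^ s)) + r * (C₂ * (a + 1) ^ s)) * m +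
        (0 + 0) * 2
      = r * (C * (a ^ (s + 1) + (a + 1) ^ s)) * m := by ring
    _ ≤ r * (C * (a + 1) ^ (s + 1)) * m := by
        gcongr
        exact pow_succ_add_pow_le a s

/-- The number of rows per block in the passage from level `d + 2` to level `d + 3`. The factor
`α_{d+2}(m)^(s+1)` makes the contracted matrix contribute only `O(m)` columns. -/
def blockSize (s d m : ℕ) : ℕ := 16 * alphaHier (d + 2) m ^ (s + 1)

lemma exists_le_mul_le_two_mul {t : ℕ} (ht : 1 ≤ t) (htm : t ≤ m) :
    ∃ b ≤ m, m ≤ b * t ∧ b * t ≤ 2 * m := by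
  have hle := Nat.div_mul_le_self (m + t - 1) t
  have hlt := Nat.lt_div_mul_add (a := m + t - 1) (b := t) (by omega)
  refine ⟨(m + t - 1) / t, Nat.div_le_of_le_mul ?_, by omega, by omega⟩
  obtain ⟨t, rfl⟩ := Nat.exists_eq_add_of_le' ht
  obtain ⟨m, rfl⟩ := Nat.exists_eq_add_of_le' (ht.trans htm)
  have := Nat.zero_le (t * m)
  rw [add_mul]
  grind

lemma Admissible.columnBound_of_blockSize {Q ψ : ℕ} (hA : Admissible ε k k₁ k₂ k₃ k₄)
    (h₁ : AckermannBound ε (s + 2) k₁ (d + 3) C₁) (h₂ : AckermannBound ε (s + 1) k₂ (d + 3) C₂)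
    (h₃ : AckermannBound 0 (s + 3) k₃ (d + 2) (4 * Q))
    (h₄ : AckermannBound ε (s + 3) k₄ (d + 2) (4 * Q)) (hQ : 2 * C₁ + C₂ ≤ Q) (hm : 2 ≤ m)
    (hle : blockSize s d m ≤ m) (h : RateBound ε r (s + 3) k (blockSize s d m) ψ) :
    ColumnBound ε r (s + 3) k m ((ψ + r * (2 * Q * alphaHier (d + 3) m ^ s)) * m) := by
  set a := alphaHier (d + 3) m
  set y := alphaHier (d + 2) m
  have ha : 1 ≤ a := alphaHier_pos (d + 2) hm
  have hy : 1 ≤ y := alphaHier_pos (d + 1) hm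
  have ht : 1 ≤ blockSize s d m := Nat.mul_pos (by norm_num) (Nat.pow_pos hy)
  obtain ⟨b, hbm, hmb, hb⟩ := exists_le_mul_le_two_mul ht hle
  have hta : alphaHier (d + 3) (blockSize s d m) ≤ a := alphaHier_mono (d + 2) hle
  have hby : alphaHier (d + 2) b ≤ y := alphaHier_mono (d + 1) hbm
  have hcontracted : 8 * (y ^ (s + 1) * b) ≤ m := by
    have : b * blockSize s d m = 16 * (y ^ (s + 1) * b) := by simp only [blockSize, y]; ring
    omega
  refine (hA.columnBound ht hmb h (h₁.rateBound hta ha le_rfl)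
    (h₂.rateBound hta ha (Nat.sub_le_sub_right (Nat.le_succ _) 1)) (h₃.rateBound hby hy le_rfl)
    (h₄.rateBound hby hy le_rfl)).mono le_rfl ?_
  calc (ψ + 2 * (r * (C₁ * a ^ s)) + r * (C₂ * a ^ s)) * m +
        (r * (4 * Q * y ^ (s + 1)) + r * (4 * Q * y ^ (s + 1))) * b
      = ψ * m + r * (2 * C₁ + C₂) * a ^ s * m + r * Q * 1 * (8 * (y ^ (s + 1) * b)) := by ring
    _ ≤ ψ * m + r * Q * a ^ s * m + r * Q * a ^ s * m := by
        gcongr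
        exact Nat.one_le_pow _ _ ha
    _ = (ψ + r * (2 * Q * a ^ s)) * m := by ring

lemma exists_blockSize_blockSize_le (s : ℕ) :
    ∃ X, 1 ≤ X ∧ ∀ z, X ≤ z → 16 * (blockSize s 0 z) ^ (s + 1) ≤ z := by
  obtain ⟨X, hX, h⟩ := exists_mul_alphaHier_two_pow_le (16 ^ (s + 2)) ((s + 1) * (s + 1))
  refine ⟨X, hX, fun z hz ↦ (le_of_eq ?_).trans (h z hz)⟩
  simp only [blockSize, zero_add]
  ring

lemma alphaHier_le_blockSize_zero (s d m : ℕ) : alphaHier (d + 2) m ≤ blockSize s 0 m :=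
  (alphaHier_le_alphaHier_two d m).trans <|
    (Nat.le_self_pow (Nat.succ_ne_zero s) _).trans (Nat.le_mul_of_pos_left _ (by norm_num))

/-- Taking the block size twice descends below `α_{d+2}(m)`, where `α_{d+3}` has dropped by one. -/
lemma blockSize_le_alphaHier {n X : ℕ}
    (hX : ∀ z, X ≤ z → 16 * (blockSize s 0 z) ^ (s + 1) ≤ z) (hXn : X ≤ n)
    (hn : n ≤ blockSize s d m) : blockSize s d n ≤ alphaHier (d + 2) m := by
  set t := blockSize s d m with ht
  have hpow : blockSize s 0 t ^ (s + 1) ≤ alphaHier (d + 2) m ^ (s + 1) := by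
    have := hX t (hXn.trans hn)
    simp only [ht, blockSize] at this ⊢
    omega
  refine le_trans ?_ <| (Nat.pow_le_pow_iff_left s.succ_ne_zero).1 hpow
  simp only [blockSize]
  gcongr
  exact (alphaHier_le_alphaHier_two d n).trans (alphaHier_mono 1 hn)

lemma blockSize_le_self {X : ℕ} (hX : ∀ z, X ≤ z → 16 * (blockSize s 0 z) ^ (s + 1) ≤ z)
    (hm : X ≤ m) : blockSize s d m ≤ m := by
  refine le_trans ?_ (hX m hm)
  simp only [blockSize]
  gcongr
  exact alphaHier_le_blockSize_zero s d m

/-- Up to `X` rows the rate is at most `Q`; beyond `X`, two descents lower `α_{d+3}(m)` by one and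
cost `2 Q α_{d+3}(m)^s` each. -/
lemma Admissible.ackermannBound_succ {Q X : ℕ} (hA : Admissible ε k k₁ k₂ k₃ k₄) (hk : 2 ≤ k)
    (h₁ : AckermannBound ε (s + 2) k₁ (d + 3) C₁) (h₂ : AckermannBound ε (s + 1) k₂ (d + 3) C₂)
    (h₃ : AckermannBound 0 (s + 3) k₃ (d + 2) (4 * Q))
    (h₄ : AckermannBound ε (s + 3) k₄ (d + 2) (4 * Q)) (hQ : 2 * C₁ + C₂ ≤ Q)
    (hX₁ : 1 ≤ X) (hX : ∀ z, X ≤ z → 16 * (blockSize s 0 z) ^ (s + 1) ≤ z)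
    (hsmall : ∀ r, RateBound ε r (s + 3) k X (r * Q)) :
    AckermannBound ε (s + 3) k (d + 3) (4 * Q) := by
  refine .of_columnBound (d := d + 2) hk fun r m hm ih ↦ ?_
  change ColumnBound ε r (s + 3) k m (r * (4 * Q * alphaHier (d + 3) m ^ (s + 1)) * m)
  set y := alphaHier (d + 2) m
  have hrec : alphaHier (d + 3) m = alphaHier (d + 3) y + 1 := alphaHier_rec (d + 1) hm
  set a := alphaHier (d + 3) y
  have hbelow : RateBound ε r (s + 3) k y (r * (4 * Q * a ^ (s + 1))) :=
    ih y (alphaHier_lt (d + 1) hm)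
  have hpow := Nat.mul_le_mul_left (4 * Q) (pow_succ_add_pow_le a s)
  have hone : Q * 1 ≤ Q * (a + 1) ^ s := Nat.mul_le_mul_left Q (Nat.one_le_pow _ _ a.succ_pos)
  rcases le_or_gt m X with hmX | hXm
  · refine (hsmall r m (by omega) hmX).mono le_rfl ?_
    rw [hrec]
    gcongr
    linarith [Nat.zero_le (4 * Q * a ^ (s + 1))]
  have hstart : RateBound ε r (s + 3) k (blockSize s d m)
      (r * (4 * Q * a ^ (s + 1) + 2 * Q * (a + 1) ^ s)) := by
    intro n hn hnm
    rcases le_or_gt n X with hnX | hXn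
    · refine (hsmall r n hn hnX).mono le_rfl ?_
      gcongr
      linarith [Nat.zero_le (4 * Q * a ^ (s + 1))]
    · have hna : alphaHier (d + 3) n ≤ a + 1 :=
        hrec ▸ alphaHier_mono (d + 2) (hnm.trans (blockSize_le_self hX hXm.le))
      refine (hA.columnBound_of_blockSize h₁ h₂ h₃ h₄ hQ (by omega) (blockSize_le_self hX hXn.le)
        (hbelow.mono le_rfl (blockSize_le_alphaHier hX hXn.le hnm) le_rfl)).mono le_rfl ?_
      rw [mul_add r]
      gcongr
  refine (hA.columnBound_of_blockSize h₁ h₂ h₃ h₄ hQ hm (blockSize_le_self hX hXm.le)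
    hstart).mono le_rfl ?_
  rw [hrec, ← mul_add]
  gcongr
  linarith

lemma exists_ackermannBound_of_admissible {k k₁ k₂ k₃ : ℕ → ℕ} (hk : 2 ≤ k 0) (hmono : Monotone k)
    (hA₀ : Admissible ε (k 0) (k₁ 0) (k₂ 0) 3 3)
    (hA : ∀ d, Admissible ε (k (d + 1)) (k₁ (d + 1)) (k₂ (d + 1)) (k₃ d) (k d))
    (h₁ : ∃ C, ∀ d, AckermannBound ε (s + 2) (k₁ d) (d + 2) C)
    (h₂ : ∃ C, ∀ d, AckermannBound ε (s + 1) (k₂ d) (d + 2) C)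
    (h₃ : ∃ C₀, ∀ C d, C₀ ≤ C → AckermannBound ε (s + 3) (k d) (d + 2) C →
      AckermannBound 0 (s + 3) (k₃ d) (d + 2) C) :
    ∃ C, ∀ d, AckermannBound ε (s + 3) (k d) (d + 2) C := by
  obtain ⟨C₁, h₁⟩ := h₁
  obtain ⟨C₂, h₂⟩ := h₂
  obtain ⟨C₀, h₃⟩ := h₃
  obtain ⟨X, hX₁, hX⟩ := exists_blockSize_blockSize_le s
  have hbase := hA₀.ackermannBound_two hk (h₁ 0) (h₂ 0)
  set B := 2 * C₁ + C₂
  set Q := B * alphaHier 2 X ^ (s + 1) + B + C₀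
  refine ⟨4 * Q, fun d ↦ ?_⟩
  induction d with
  | zero => exact hbase.mono le_rfl (by omega)
  | succ d ih =>
    refine (hA d).ackermannBound_succ (hk.trans (hmono (Nat.zero_le _))) (h₁ (d + 1)) (h₂ (d + 1))
      (h₃ _ d (by omega) ih) ih (by omega) hX₁ hX fun r ↦ ?_
    refine (hbase r X).mono (hmono (Nat.zero_le _)) le_rfl (Nat.mul_le_mul_left r ?_)
    exact (Nat.le_add_right _ B).trans (Nat.le_add_right _ C₀)

end AckermannBounds

section Thresholds

lemma Rfun_two (s : ℕ) : Rfun (s + 2) 2 = 2 ^ s + 1 := by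
  match s with
  | 0 | 1 | 2 | s + 3 => simp [Rfun]

lemma Rfun_succ (s d : ℕ) : Rfun (s + 3) (d + 3) = 2 * (Rfun (s + 2) (d + 3) - 1) +
    (Rfun (s + 3) (d + 2) - 3) * (Rfun (s + 1) (d + 3) - 1) + 1 := by
  match s with
  | 0 => simp [Rfun]
  | 1 => simp only [Nat.reduceAdd, Rfun]; omega
  | s + 2 => rw [Rfun, mul_comm (_ - 3)]

lemma add_two_le_Rfun (s d : ℕ) : s + 2 ≤ Rfun (s + 2) (d + 2) := by
  induction s with
  | zero => simp [Rfun]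
  | succ s ih =>
    rcases d with _ | d
    · have : s + 1 < 2 ^ (s + 1) := Nat.lt_two_pow_self
      have := Rfun_two (s + 1)
      simp only [zero_add] at *
      omega
    · have := Rfun_succ s d
      simp only [add_assoc, Nat.reduceAdd] at *
      omega

lemma Rfun_mono (s : ℕ) : Monotone fun d ↦ Rfun (s + 3) (d + 2) := by
  refine monotone_nat_of_le_succ fun d ↦ ?_
  change Rfun (s + 3) (d + 2) ≤ Rfun (s + 3) (d + 3)
  rcases s with _ | s
  · simp [Rfun]
  · have hs : s + 3 ≤ Rfun (s + 3) (d + 3) := add_two_le_Rfun (s + 1) (d + 1)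
    have hs' : s + 2 ≤ Rfun (s + 2) (d + 3) := add_two_le_Rfun s (d + 1)
    have := Nat.le_mul_of_pos_right (Rfun (s + 4) (d + 2) - 3)
      (show 0 < Rfun (s + 2) (d + 3) - 1 by omega)
    have : Rfun (s + 4) (d + 3) = _ := Rfun_succ (s + 1) d
    simp only [add_assoc, Nat.reduceAdd] at *
    omega

lemma Dfun_two (s : ℕ) : Dfun (s + 3) 2 = 2 * Dfun (s + 2) 2 + 1 := by
  rcases s with _ | s
  · simp [Dfun]
  · have := Nat.one_le_two_pow (n := s)
    simp only [Dfun, pow_succ]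
    omega

lemma Dfun_succ_of_le {s d : ℕ} (h : Rfun (s + 3) (d + 2) ≤ Dfun (s + 3) (d + 2)) :
    Dfun (s + 3) (d + 3) = 2 * Dfun (s + 2) (d + 3) +
      (Rfun (s + 3) (d + 2) - 3) * (Dfun (s + 1) (d + 3) + 1) +
      (Dfun (s + 3) (d + 2) - Rfun (s + 3) (d + 2)) + 1 := by
  rw [Dfun, mul_comm (_ - 3)]
  omega

lemma Rfun_le_Dfun : ∀ s d : ℕ, Rfun (s + 1) (d + 2) ≤ Dfun (s + 1) (d + 2)
  | 0, _ | 1, _ => by simp [Rfun, Dfun]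
  | s + 2, 0 => by
    have : Rfun (s + 2) 2 ≤ Dfun (s + 2) 2 := Rfun_le_Dfun (s + 1) 0
    have := Rfun_two s
    change Rfun (s + 1 + 2) 2 ≤ Dfun (s + 3) 2
    rw [Rfun_two, Dfun_two, pow_succ]
    omega
  | s + 2, d + 1 => by
    change Rfun (s + 3) (d + 3) ≤ Dfun (s + 3) (d + 3)
    have hinner : Rfun (s + 1) (d + 3) ≤ Dfun (s + 1) (d + 3) := Rfun_le_Dfun s (d + 1)
    have hend : Rfun (s + 2) (d + 3) ≤ Dfun (s + 2) (d + 3) := Rfun_le_Dfun (s + 1) (d + 1)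
    have hmul := Nat.mul_le_mul_left (Rfun (s + 3) (d + 2) - 3)
      (show Rfun (s + 1) (d + 3) - 1 ≤ Dfun (s + 1) (d + 3) + 1 by omega)
    rw [Rfun_succ, Dfun_succ_of_le (Rfun_le_Dfun (s + 2) d)]
    omega

lemma add_two_le_Dfun (s d : ℕ) : s + 2 ≤ Dfun (s + 2) (d + 2) :=
  (add_two_le_Rfun s d).trans (Rfun_le_Dfun (s + 1) d)

lemma Dfun_mono (s : ℕ) : Monotone fun d ↦ Dfun (s + 3) (d + 2) := by
  refine monotone_nat_of_le_succ fun d ↦ ?_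
  change Dfun (s + 3) (d + 2) ≤ Dfun (s + 3) (d + 3)
  have hend : s + 2 ≤ Dfun (s + 2) (d + 3) := add_two_le_Dfun s (d + 1)
  have hmul := Nat.le_mul_of_pos_right (Rfun (s + 3) (d + 2) - 3)
    (show 0 < Dfun (s + 1) (d + 3) + 1 by omega)
  rw [Dfun_succ_of_le (Rfun_le_Dfun (s + 2) d)]
  omega

lemma admissible_Rfun (s d : ℕ) : Admissible 0 (Rfun (s + 3) (d + 3)) (Rfun (s + 2) (d + 3))
    (max 1 (Rfun (s + 1) (d + 3))) (Rfun (s + 3) (d + 2)) (Rfun (s + 3) (d + 2)) where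
  one_le_end := Nat.one_le_of_lt (add_two_le_Rfun s (d + 1))
  one_le_inner := le_max_left _ _
  three_le_heavy := le_of_add_le_right (add_two_le_Rfun (s + 1) d)
  heavy_le_total := le_rfl
  lt_card := by
    rw [Rfun_succ,
      show max 1 (Rfun (s + 1) (d + 3)) + 2 * 0 - 1 = Rfun (s + 1) (d + 3) - 1 by omega]
    omega

lemma admissible_Rfun_two (s : ℕ) :
    Admissible 0 (Rfun (s + 3) 2) (Rfun (s + 2) 2) (max 1 (Rfun (s + 1) 2)) 3 3 where
  one_le_end := Nat.one_le_of_lt (add_two_le_Rfun s 0)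
  one_le_inner := le_max_left _ _
  three_le_heavy := le_rfl
  heavy_le_total := le_rfl
  lt_card := by rw [Rfun_two, Rfun_two (s + 1), pow_succ]; omega

lemma admissible_Dfun (s d : ℕ) : Admissible 1 (Dfun (s + 3) (d + 3)) (Dfun (s + 2) (d + 3))
    (Dfun (s + 1) (d + 3)) (Rfun (s + 3) (d + 2)) (Dfun (s + 3) (d + 2)) where
  one_le_end := Nat.one_le_of_lt (add_two_le_Dfun s (d + 1))
  one_le_inner := Nat.le_add_left _ _
  three_le_heavy := le_of_add_le_right (add_two_le_Rfun (s + 1) d)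
  heavy_le_total := Rfun_le_Dfun (s + 2) d
  lt_card := by
    rw [Dfun_succ_of_le (Rfun_le_Dfun (s + 2) d),
      show Dfun (s + 1) (d + 3) + 2 * 1 - 1 = Dfun (s + 1) (d + 3) + 1 by omega]
    omega

lemma admissible_Dfun_two (s : ℕ) :
    Admissible 1 (Dfun (s + 3) 2) (Dfun (s + 2) 2) (Dfun (s + 1) 2) 3 3 where
  one_le_end := Nat.one_le_of_lt (add_two_le_Dfun s 0)
  one_le_inner := Nat.le_add_left _ _
  three_le_heavy := le_rfl
  heavy_le_total := le_rfl
  lt_card := by rw [Dfun_two]; omega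

/-- The threshold `R₁ = 0` is raised to `1`, as a plain formation in one block needs an entry. -/
lemma exists_ackermannBound_Rfun (s : ℕ) :
    ∃ C, ∀ d, AckermannBound 0 (s + 1) (max 1 (Rfun (s + 1) (d + 2))) (d + 2) C := by
  have hmax : ∀ s d, max 1 (Rfun (s + 2) (d + 2)) = Rfun (s + 2) (d + 2) := fun s d ↦ by
    have := add_two_le_Rfun s d
    omega
  induction s using Nat.twoStepInduction with
  | zero => exact ⟨1, fun d ↦ ackermannBound_one (le_max_left _ _)⟩
  | one => exact ⟨1, fun d ↦ by simpa [Rfun] using ackermannBound_two⟩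
  | more s h₂ h₁ =>
    simp only [hmax (s + 1), hmax s] at h₁ ⊢
    exact exists_ackermannBound_of_admissible (le_of_add_le_right (add_two_le_Rfun (s + 1) 0))
      (Rfun_mono s) (admissible_Rfun_two s) (admissible_Rfun s) h₁ h₂ ⟨0, fun _ _ _ h ↦ h⟩

lemma exists_ackermannBound_Dfun (s : ℕ) :
    ∃ C, ∀ d, AckermannBound 1 (s + 1) (Dfun (s + 1) (d + 2)) (d + 2) C := by
  induction s using Nat.twoStepInduction with
  | zero => exact ⟨1, fun d ↦ ackermannBound_one (Nat.le_add_left _ _)⟩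
  | one => exact ⟨1, fun d ↦ by simpa [Dfun] using ackermannBound_two⟩
  | more s h₂ h₁ =>
    obtain ⟨C₀, hC₀⟩ := exists_ackermannBound_Rfun (s + 2)
    exact exists_ackermannBound_of_admissible (le_of_add_le_right (add_two_le_Dfun (s + 1) 0))
      (Dfun_mono s) (admissible_Dfun_two s) (admissible_Dfun s) h₁ h₂
      ⟨C₀, fun C d hC _ ↦ (hC₀ d).mono
        (max_le (Nat.one_le_of_lt (add_two_le_Rfun (s + 1) d)) le_rfl) hC⟩

end Thresholds

section Matrices

variable {m n : ℕ} (M : Fin m → Fin n → Bool)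

/-- The rows of the `1`-entries of column `j` of `M`. -/
def colRows (j : Fin n) : Finset (Fin m) := {x | M x j = true}

lemma card_colRows (j : Fin n) : #(colRows M j) = colOnes M j := by
  rw [colOnes, Nat.card_eq_fintype_card, Fintype.card_subtype, colRows]

variable {M}

lemma card_block_colRows {s : ℕ} {γ : Fin m → ℕ} (hγ : ∀ x, γ x < s) (i : Fin s) (j : Fin n) :
    #(block γ (colRows M j) i) = Nat.card {x : Fin m // ⟨γ x, hγ x⟩ = i ∧ M x j = true} := by
  rw [Nat.card_eq_fintype_card, Fintype.card_subtype, block, colRows, filter_filter]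
  simp only [Fin.ext_iff, and_comm]

lemma Formation.doubledFormation {r s : ℕ} (hs : 2 ≤ s) (h : Formation 1 r s univ (colRows M)) :
    _root_.DoubledFormation r s M := by
  obtain ⟨T, -, hr, γ, hγ, hγs, hquota⟩ := h
  obtain ⟨T', hT', hcard⟩ := exists_subset_card_eq hr
  refine ⟨fun x ↦ ⟨γ x, hγs x⟩, fun x y hxy ↦ hγ hxy, T'.orderEmbOfFin hcard,
    (T'.orderEmbOfFin hcard).strictMono, fun j i ↦ ?_⟩
  have hij := hquota _ (hT' (T'.orderEmbOfFin_mem hcard j)) i i.isLt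
  rw [card_block_colRows hγs] at hij
  refine ⟨le_trans ?_ hij, fun hi₀ hi₁ ↦ le_trans ?_ hij⟩ <;> unfold quota
  · split_ifs <;> omega
  · rw [if_neg hi₀, if_neg (by omega)]

end Matrices

end DoubledFormation

/-- For every `s ≥ 2` there is a constant `c_s` such that for all
`d ≥ 2`, `r ≥ 2`, `m ≥ k ≥ D_s(d)`, every (0,1)-matrix with `m` rows, at least `k`
`1`-entries in every column and no doubled `(r,s)`-formation has at most
`c_s·r·m·α_d(m)^(s−2)` columns. -/
theorem doubled_formation_free_bound :
    ∀ s : ℕ, 2 ≤ s → ∃ c : ℝ,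
      ∀ d r m k : ℕ, 2 ≤ d → 2 ≤ r → k ≤ m → Dfun s d ≤ k →
        ∀ (n : ℕ) (M : Fin m → Fin n → Bool),
          (∀ j : Fin n, k ≤ colOnes M j) → ¬ DoubledFormation r s M →
            (n : ℝ) ≤ c * (r : ℝ) * (m : ℝ) * (alphaHier d m : ℝ) ^ (s - 2) := by
  intro s hs
  obtain ⟨s, rfl⟩ := Nat.exists_eq_add_of_le' hs
  obtain ⟨C, hC⟩ := DoubledFormation.exists_ackermannBound_Dfun (s + 1)
  refine ⟨C, fun d r m k hd _ hkm hDk n M hcol hfree ↦ ?_⟩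
  obtain ⟨d, rfl⟩ := Nat.exists_eq_add_of_le' hd
  have hm : 1 ≤ m := by
    have := DoubledFormation.add_two_le_Dfun s d
    omega
  have hn : n ≤ r * (C * alphaHier (d + 2) m ^ s) * m := by
    simpa using hC d r m m hm le_rfl (Fin m) (Fin n) .univ .univ (DoubledFormation.colRows M)
      (by simp) (fun _ _ ↦ Finset.subset_univ _)
      (fun j _ ↦ DoubledFormation.card_colRows M j ▸ hDk.trans (hcol j))
      (fun h ↦ hfree (h.doubledFormation hs))
  calc (n : ℝ) ≤ ((r * (C * alphaHier (d + 2) m ^ s) * m : ℕ) : ℝ) := by exact_mod_cast hn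
    _ = C * r * m * (alphaHier (d + 2) m : ℝ) ^ (s + 2 - 2) := by
      rw [Nat.add_sub_cancel]
      push_cast
      ring
end
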